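/- Every connected cubic simple graph on n vertices contains a set of at most ⌈n/9⌉ vertex-disjoint paths whose vertex sets cover all vertices of the graph. -/

import Mathlib

/-!
Partition the vertices into parts inducing traceable subgraphs, with as few parts as possible and,
among those, with as few homogeneously traceable parts as possible (homogeneously traceable: every
vertex is an end of a Hamiltonian path). Moving a vertex from one part to another shows that at most
one part is homogeneously traceable. By minimality no edge joins ends of Hamiltonian paths of
different parts, so an end with a neighbour outside its part requests an inner vertex of another
part. For a part that is not homogeneously traceable, the requests it issues and the edges of its
path that no request can touch are together worth at least eight. Each requested vertex pays with
the edges of its own path around it, and counting the path edges of all `k` parts gives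
`n ≥ 9 * (k - 1) + 1`.
-/

namespace CubicPathCover

section HamPath

variable {V : Type*} {G : SimpleGraph V} {X Y : Finset V} {m d : ℕ} {p : ℕ → V}

/-- `p 0, …, p (m - 1)` is a Hamiltonian path of the subgraph of `G` induced on `X`. Paths are
sequences rather than walks so that rotations become arithmetic on indices; the values `p i` with
`m ≤ i` are irrelevant. -/
structure IsHamPath (G : SimpleGraph V) (X : Finset V) (m : ℕ) (p : ℕ → V) : Prop where
  pos : 0 < m
  inj : ∀ ⦃i j⦄, i < m → j < m → p i = p j → i = j
  adj_succ : ∀ ⦃i⦄, i + 1 < m → G.Adj (p i) (p (i + 1))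
  mem_iff : ∀ v, v ∈ X ↔ ∃ i < m, p i = v

/-- `X` has a Hamiltonian path from `u` to `w`. -/
def HasHamPath (G : SimpleGraph V) (X : Finset V) (u w : V) : Prop :=
  ∃ m p, IsHamPath G X m p ∧ p 0 = u ∧ p (m - 1) = w

/-- `w` is an end of some Hamiltonian path of `X`. -/
def IsHamEnd (G : SimpleGraph V) (X : Finset V) (w : V) : Prop := ∃ u, HasHamPath G X u w

/-- `X` has a Hamiltonian path. -/
def Traceable (G : SimpleGraph V) (X : Finset V) : Prop := ∃ u w, HasHamPath G X u w

/-- `X` is homogeneously traceable: each of its vertices is an end of a Hamiltonian path of `X`. -/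
def HomTraceable (G : SimpleGraph V) (X : Finset V) : Prop := ∀ v ∈ X, IsHamEnd G X v

namespace IsHamPath

theorem mem (h : IsHamPath G X m p) {i : ℕ} (hi : i < m) : p i ∈ X := (h.mem_iff _).2 ⟨i, hi, rfl⟩

theorem ne (h : IsHamPath G X m p) {i j : ℕ} (hi : i < m) (hj : j < m) (hij : i ≠ j) :
    p i ≠ p j :=
  fun e => hij (h.inj hi hj e)

theorem eq_image [DecidableEq V] (h : IsHamPath G X m p) : X = (Finset.range m).image p := by
  ext v
  simp [h.mem_iff v]

theorem card_eq (h : IsHamPath G X m p) : X.card = m := by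
  classical
  rw [h.eq_image, Finset.card_image_of_injOn, Finset.card_range]
  intro i hi j hj e
  exact h.inj (by simpa using hi) (by simpa using hj) e

theorem adj_of_eq (h : IsHamPath G X m p) {i j : ℕ} (hij : j = i + 1) (hj : j < m) :
    G.Adj (p i) (p j) := by
  subst hij
  exact h.adj_succ hj

theorem adj_pred (h : IsHamPath G X m p) {i : ℕ} (h0 : 0 < i) (hi : i < m) :
    G.Adj (p i) (p (i - 1)) :=
  (h.adj_of_eq (by omega) hi).symm

theorem reindex (h : IsHamPath G X m p) {σ : ℕ → ℕ} (hlt : ∀ i < m, σ i < m)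
    (hinv : ∀ i < m, σ (σ i) = i)
    (hadj : ∀ i, i + 1 < m → G.Adj (p (σ i)) (p (σ (i + 1)))) :
    IsHamPath G X m (fun i => p (σ i)) where
  pos := h.pos
  inj i j hi hj e := by
    rw [← hinv i hi, ← hinv j hj, h.inj (hlt i hi) (hlt j hj) e]
  adj_succ := hadj
  mem_iff v := by
    rw [h.mem_iff v]
    constructor
    · rintro ⟨i, hi, rfl⟩
      exact ⟨σ i, hlt i hi, by simp only [hinv i hi]⟩
    · rintro ⟨i, hi, rfl⟩
      exact ⟨σ i, hlt i hi, rfl⟩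

theorem reverse (h : IsHamPath G X m p) : IsHamPath G X m (fun i => p (m - 1 - i)) :=
  h.reindex (fun i hi => by omega) (fun i hi => by omega)
    fun i hi => (h.adj_of_eq (by omega) (by omega)).symm

theorem hasHamPath (h : IsHamPath G X m p) : HasHamPath G X (p 0) (p (m - 1)) :=
  ⟨m, p, h, rfl, rfl⟩

theorem isHamEnd_last (h : IsHamPath G X m p) : IsHamEnd G X (p (m - 1)) := ⟨_, h.hasHamPath⟩

end IsHamPath

theorem HasHamPath.symm {u w : V} (h : HasHamPath G X u w) : HasHamPath G X w u := by
  obtain ⟨m, p, h, rfl, rfl⟩ := h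
  simpa using h.reverse.hasHamPath

theorem IsHamPath.isHamEnd_zero (h : IsHamPath G X m p) : IsHamEnd G X (p 0) :=
  ⟨_, h.hasHamPath.symm⟩

/-- The Pósa rotation: when `p (m - 1)` is adjacent to `p d`, the stretch after index `d` is
traversed backwards. -/
def posaRotate (p : ℕ → V) (m d : ℕ) : ℕ → V := fun i => p (if i ≤ d then i else m + d - i)

theorem posaRotate_of_le {i : ℕ} (h : i ≤ d) : posaRotate p m d i = p i := by simp [posaRotate, h]

theorem posaRotate_of_lt {i : ℕ} (h : d < i) : posaRotate p m d i = p (m + d - i) := by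
  simp [posaRotate, Nat.not_le.2 h]

theorem posaRotate_of_add_eq {i k : ℕ} (h : d < i) (hk : i + k = m + d) :
    posaRotate p m d i = p k := by
  rw [posaRotate_of_lt h]
  congr 1
  omega

theorem IsHamPath.rotate (h : IsHamPath G X m p) (hd : d + 1 < m)
    (ha : G.Adj (p (m - 1)) (p d)) : IsHamPath G X m (posaRotate p m d) := by
  refine h.reindex (fun i hi => ?_) (fun i hi => ?_) fun i hi => ?_
  · split_ifs <;> omega
  · split_ifs <;> omega
  · split_ifs with h1 h2 h2
    · exact h.adj_succ hi
    · obtain rfl : i = d := by omega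
      rw [show m + i - (i + 1) = m - 1 by omega]
      exact ha.symm
    · omega
    · exact (h.adj_of_eq (by omega) (by omega)).symm

theorem IsHamPath.append [DecidableEq V] {l : ℕ} {q : ℕ → V} (hp : IsHamPath G X m p)
    (hq : IsHamPath G Y l q) (hXY : Disjoint X Y) (ha : G.Adj (p (m - 1)) (q 0)) :
    IsHamPath G (X ∪ Y) (m + l) (fun i => if i < m then p i else q (i - m)) where
  pos := Nat.add_pos_left hp.pos l
  inj i j hi hj e := by
    have hne : ∀ a b, a < m → b < l → p a ≠ q b := fun a b ha hb e =>
      Finset.disjoint_left.1 hXY (hp.mem ha) (e ▸ hq.mem hb)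
    split_ifs at e with h1 h2 h2
    · exact hp.inj h1 h2 e
    · exact absurd e (hne _ _ h1 (by omega))
    · exact absurd e.symm (hne _ _ h2 (by omega))
    · have := hq.inj (by omega) (by omega) e
      omega
  adj_succ i hi := by
    split_ifs with h1 h2 h2
    · exact hp.adj_succ h2
    · rwa [show i = m - 1 by omega, show m - 1 + 1 - m = 0 by omega]
    · omega
    · exact hq.adj_of_eq (by omega) (by omega)
  mem_iff v := by
    rw [Finset.mem_union, hp.mem_iff, hq.mem_iff]
    constructor
    · rintro (⟨i, hi, rfl⟩ | ⟨i, hi, rfl⟩)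
      · exact ⟨i, by omega, by simp [hi]⟩
      · exact ⟨m + i, by omega, by simp⟩
    · rintro ⟨i, hi, rfl⟩
      by_cases h1 : i < m
      · exact .inl ⟨i, h1, by simp [h1]⟩
      · exact .inr ⟨i - m, by omega, by simp [h1]⟩

theorem HasHamPath.append [DecidableEq V] {u w u' w' : V} (h : HasHamPath G X u w)
    (h' : HasHamPath G Y u' w') (hXY : Disjoint X Y) (ha : G.Adj w u') :
    HasHamPath G (X ∪ Y) u w' := by
  obtain ⟨m, p, hp, rfl, rfl⟩ := h
  obtain ⟨l, q, hq, rfl, rfl⟩ := h'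
  have hm := hp.pos
  have hl := hq.pos
  refine ⟨_, _, hp.append hq hXY ha, if_pos hm, ?_⟩
  rw [if_neg (by omega), show m + l - 1 - m = l - 1 by omega]

theorem HasHamPath.traceable {u w : V} (h : HasHamPath G X u w) : Traceable G X := ⟨u, w, h⟩

theorem hasHamPath_singleton (G : SimpleGraph V) (v : V) : HasHamPath G {v} v v :=
  ⟨1, fun _ => v, ⟨one_pos, by omega, by omega, by simp [eq_comm]⟩, rfl, rfl⟩

theorem Traceable.nonempty (h : Traceable G X) : X.Nonempty := by
  obtain ⟨u, w, m, p, h, -, -⟩ := h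
  exact ⟨p 0, h.mem h.pos⟩

theorem IsHamPath.segment [DecidableEq V] (h : IsHamPath G X m p) {a b : ℕ} (hab : a < b)
    (hb : b ≤ m) : IsHamPath G ((Finset.Ico a b).image p) (b - a) (fun i => p (a + i)) where
  pos := by omega
  inj i j hi hj e := by
    have := h.inj (by omega) (by omega) e
    omega
  adj_succ i hi := h.adj_succ (i := a + i) (by omega)
  mem_iff v := by
    simp only [Finset.mem_image, Finset.mem_Ico]
    constructor
    · rintro ⟨i, hi, rfl⟩
      exact ⟨i - a, by omega, by congr 1; omega⟩
    · rintro ⟨i, hi, rfl⟩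
      exact ⟨a + i, by omega, rfl⟩

theorem IsHamPath.exists_split [DecidableEq V] (h : IsHamPath G X m p) {i : ℕ} (hi : i + 1 < m) :
    ∃ A B, X = A ∪ B ∧ Disjoint A B ∧ HasHamPath G A (p 0) (p i) ∧
      HasHamPath G B (p (i + 1)) (p (m - 1)) ∧ (∀ j ≤ i, p j ∈ A) ∧
      ∀ j, i < j → j < m → p j ∈ B := by
  refine ⟨(Finset.Ico 0 (i + 1)).image p, (Finset.Ico (i + 1) m).image p, ?_, ?_, ?_, ?_,
    fun j hj => Finset.mem_image_of_mem p (by simp; omega),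
    fun j hj hjm => Finset.mem_image_of_mem p (by simp; omega)⟩
  · rw [← Finset.image_union, Finset.Ico_union_Ico_eq_Ico (by omega) hi.le, h.eq_image,
      Finset.range_eq_Ico]
  · simp only [Finset.disjoint_left, Finset.mem_image, Finset.mem_Ico, not_exists, not_and]
    rintro _ ⟨a, ha, rfl⟩ b hb e
    have := h.inj (by omega) (by omega) e
    omega
  · exact ⟨_, _, h.segment (by omega) (by omega), by simp, by simp⟩
  · exact ⟨_, _, h.segment hi le_rfl, rfl, by congr 1; omega⟩

theorem IsHamPath.homTraceable_of_adj (h : IsHamPath G X m p) (ha : G.Adj (p (m - 1)) (p 0)) :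
    HomTraceable G X := by
  classical
  intro v hv
  obtain ⟨i, hi, rfl⟩ := (h.mem_iff v).1 hv
  by_cases him : i + 1 < m
  · obtain ⟨A, B, rfl, hAB, hA, hB, -, -⟩ := h.exists_split him
    exact ⟨_, Finset.union_comm A B ▸ hB.append hA hAB.symm ha⟩
  · obtain rfl : i = m - 1 := by omega
    exact h.isHamEnd_last

/-- Every vertex has three neighbours. Counting with `Set.ncard` avoids carrying the local
finiteness instance that `SimpleGraph.IsRegularOfDegree` needs. -/
def IsCubic (G : SimpleGraph V) : Prop := ∀ v, (G.neighborSet v).ncard = 3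

theorem IsCubic.exists_adj_ne_ne (hG : IsCubic G) (v a b : V) :
    ∃ c, c ≠ a ∧ c ≠ b ∧ G.Adj v c := by
  have hlt : ({a, b} : Set V).ncard < (G.neighborSet v).ncard := by
    rw [hG v]
    exact (Set.ncard_insert_le a {b}).trans_lt (by simp)
  obtain ⟨c, hc, hcab⟩ := Set.exists_mem_notMem_of_ncard_lt_ncard hlt
  simp only [Set.mem_insert_iff, Set.mem_singleton_iff, not_or] at hcab
  exact ⟨c, hcab.1, hcab.2, hc⟩

theorem IsCubic.eq_or_eq_or_eq_of_adj (hG : IsCubic G) {v a b c w : V} (ha : G.Adj v a)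
    (hb : G.Adj v b) (hc : G.Adj v c) (hab : a ≠ b) (hac : a ≠ c) (hbc : b ≠ c)
    (hw : G.Adj v w) : w = a ∨ w = b ∨ w = c := by
  have hsub : ({a, b, c} : Set V) ⊆ G.neighborSet v := by
    rintro x (rfl | rfl | rfl) <;> assumption
  have hcard : (G.neighborSet v).ncard ≤ ({a, b, c} : Set V).ncard := by
    rw [hG v, Set.ncard_eq_three.2 ⟨a, b, c, hab, hac, hbc, rfl⟩]
  have heq := Set.eq_of_subset_of_ncard_le hsub hcard
    (Set.finite_of_ncard_ne_zero (by rw [hG v]; omega))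
  simpa [← heq] using (show w ∈ G.neighborSet v from hw)

/-- `v` has a neighbour outside `X`. -/
def IsBoundary (G : SimpleGraph V) (X : Finset V) (v : V) : Prop := ∃ w, G.Adj v w ∧ w ∉ X

/-- A vertex of `X` is sealed if it is an end of a Hamiltonian path of `X` or has no neighbour
outside `X`. When `X` is a part of a path partition with as few parts as possible, no end of another
part can then be adjacent to it. -/
def IsSealed (G : SimpleGraph V) (X : Finset V) (v : V) : Prop :=
  IsHamEnd G X v ∨ ¬ IsBoundary G X v

/-- Both ends of the `i`-th edge of the path `p 0, …, p (m - 1)` are sealed. -/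
structure IsSealedEdge (G : SimpleGraph V) (X : Finset V) (m : ℕ) (p : ℕ → V) (i : ℕ) : Prop where
  lt : i + 1 < m
  left : IsSealed G X (p i)
  right : IsSealed G X (p (i + 1))

theorem IsHamEnd.isSealed {v : V} (h : IsHamEnd G X v) : IsSealed G X v := .inl h

theorem IsCubic.not_isBoundary (hG : IsCubic G) {v a b c : V} (ha : G.Adj v a) (hb : G.Adj v b)
    (hc : G.Adj v c) (hab : a ≠ b) (hac : a ≠ c) (hbc : b ≠ c) (haX : a ∈ X) (hbX : b ∈ X)
    (hcX : c ∈ X) : ¬ IsBoundary G X v := by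
  rintro ⟨w, hw, hwX⟩
  rcases hG.eq_or_eq_or_eq_of_adj ha hb hc hab hac hbc hw with rfl | rfl | rfl
  · exact hwX haX
  · exact hwX hbX
  · exact hwX hcX

namespace IsHamPath

theorem exists_third (h : IsHamPath G X m p) (hG : IsCubic G) {v : V}
    (hv : ¬ IsBoundary G X v) (a b : ℕ) : ∃ c < m, c ≠ a ∧ c ≠ b ∧ G.Adj v (p c) := by
  obtain ⟨c, hca, hcb, hc⟩ := hG.exists_adj_ne_ne v (p a) (p b)
  have hcX : c ∈ X := by
    by_contra hcX
    exact hv ⟨c, hc, hcX⟩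
  obtain ⟨i, hi, rfl⟩ := (h.mem_iff c).1 hcX
  exact ⟨i, hi, fun e => hca (by rw [e]), fun e => hcb (by rw [e]), hc⟩

theorem eq_or_eq_or_eq_of_adj (h : IsHamPath G X m p) (hG : IsCubic G) {v : V} {a b c e : ℕ}
    (hva : G.Adj v (p a)) (hvb : G.Adj v (p b)) (hvc : G.Adj v (p c)) (ha : a < m) (hb : b < m)
    (hc : c < m) (hab : a ≠ b) (hac : a ≠ c) (hbc : b ≠ c) (he : e < m) (hve : G.Adj v (p e)) :
    e = a ∨ e = b ∨ e = c := by
  rcases hG.eq_or_eq_or_eq_of_adj hva hvb hvc (h.ne ha hb hab) (h.ne ha hc hac) (h.ne hb hc hbc)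
    hve with h' | h' | h'
  · exact .inl (h.inj he ha h')
  · exact .inr (.inl (h.inj he hb h'))
  · exact .inr (.inr (h.inj he hc h'))

theorem not_isBoundary_of_chord (h : IsHamPath G X m p) (hG : IsCubic G) {i k : ℕ}
    (hi : 0 < i) (him : i + 1 < m) (hk : k < m) (hne : k ≠ i - 1) (hne' : k ≠ i + 1)
    (ha : G.Adj (p i) (p k)) : ¬ IsBoundary G X (p i) :=
  hG.not_isBoundary (h.adj_pred hi (by omega)) (h.adj_succ him) ha
    (h.ne (by omega) him (by omega)) (h.ne (by omega) hk (by omega)) (h.ne him hk (by omega))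
    (h.mem (by omega)) (h.mem him) (h.mem hk)

theorem eq_of_chord (h : IsHamPath G X m p) (hG : IsCubic G) {i k e : ℕ}
    (hi : 0 < i) (him : i + 1 < m) (hk : k < m) (hne : k ≠ i - 1) (hne' : k ≠ i + 1)
    (ha : G.Adj (p i) (p k)) (he : e < m) (hie : G.Adj (p i) (p e)) :
    e = i - 1 ∨ e = i + 1 ∨ e = k :=
  h.eq_or_eq_or_eq_of_adj hG (h.adj_pred hi (by omega)) (h.adj_succ him) ha (by omega) him hk
    (by omega) (by omega) (by omega) he hie

end IsHamPath

end HamPath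

section Lobe

variable {V : Type*} {G : SimpleGraph V} {X Y : Finset V} {m d j : ℕ} {p q : ℕ → V}

/-- `q` is a Hamiltonian path of `X` that follows `p` up to index `j`. -/
structure IsRerouting (G : SimpleGraph V) (X : Finset V) (m : ℕ) (p : ℕ → V) (j : ℕ)
    (q : ℕ → V) : Prop where
  isHamPath : IsHamPath G X m q
  eq_of_le : ∀ i ≤ j, q i = p i

/-- `w` is the last vertex of a Hamiltonian path of `X` that follows `p` up to index `j`. -/
def IsReroutedEnd (G : SimpleGraph V) (X : Finset V) (m : ℕ) (p : ℕ → V) (j : ℕ) (w : V) : Prop :=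
  ∃ q, IsRerouting G X m p j q ∧ q (m - 1) = w

theorem IsReroutedEnd.isHamEnd {w : V} (h : IsReroutedEnd G X m p j w) : IsHamEnd G X w := by
  obtain ⟨q, hq, rfl⟩ := h
  exact hq.isHamPath.isHamEnd_last

theorem IsReroutedEnd.isSealed {w : V} (h : IsReroutedEnd G X m p j w) : IsSealed G X w :=
  h.isHamEnd.isSealed

theorem IsHamPath.isRerouting (h : IsHamPath G X m p) (j : ℕ) : IsRerouting G X m p j p :=
  ⟨h, fun _ _ => rfl⟩

namespace IsRerouting

theorem isReroutedEnd (h : IsRerouting G X m p j q) : IsReroutedEnd G X m p j (q (m - 1)) :=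
  ⟨q, h, rfl⟩

theorem trans {r : ℕ → V} (h : IsRerouting G X m q j r) (h' : IsRerouting G X m p j q) :
    IsRerouting G X m p j r :=
  ⟨h.isHamPath, fun i hi => by rw [h.eq_of_le i hi, h'.eq_of_le i hi]⟩

theorem rotate (h : IsRerouting G X m p j q) (hjd : j ≤ d) (hd : d + 1 < m)
    (ha : G.Adj (q (m - 1)) (q d)) : IsRerouting G X m p j (posaRotate q m d) :=
  ⟨h.isHamPath.rotate hd ha, fun i hi => by rw [posaRotate_of_le (by omega), h.eq_of_le i hi]⟩

theorem isReroutedEnd_rotate (h : IsRerouting G X m p j q) (hjd : j ≤ d) (hd : d + 1 < m)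
    (ha : G.Adj (q (m - 1)) (q d)) : IsReroutedEnd G X m p j (q (d + 1)) :=
  ⟨_, h.rotate hjd hd ha, posaRotate_of_add_eq (by omega) (by omega)⟩

theorem isReroutedEnd_rotate_low (h : IsRerouting G X m p j q) {e : ℕ} (hje : j ≤ e)
    (hed : e < d) (hd : d + 1 < m) (ha : G.Adj (q (m - 1)) (q d)) (hb : G.Adj (q (d + 1)) (q e)) :
    IsReroutedEnd G X m p j (q (e + 1)) := by
  have hrot := (h.rotate (by omega) hd ha).isReroutedEnd_rotate (d := e) hje (by omega) (by
    rwa [posaRotate_of_add_eq (k := d + 1) (by omega) (by omega), posaRotate_of_le (by omega)])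
  rwa [posaRotate_of_le (by omega)] at hrot

theorem isReroutedEnd_rotate_high (h : IsRerouting G X m p j q) {e : ℕ} (hjd : j ≤ d)
    (hde : d + 3 ≤ e) (he : e < m) (ha : G.Adj (q (m - 1)) (q d))
    (hb : G.Adj (q (d + 1)) (q e)) : IsReroutedEnd G X m p j (q (e - 1)) := by
  have hrot := (h.rotate hjd (by omega) ha).isReroutedEnd_rotate (d := m + d - e) (by omega)
    (by omega) (by
      rwa [posaRotate_of_add_eq (k := d + 1) (by omega) (by omega),
        posaRotate_of_add_eq (k := e) (by omega) (by omega)])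
  rwa [posaRotate_of_add_eq (k := e - 1) (by omega) (by omega)] at hrot

theorem isSealedEdge_of_chord (hG : IsCubic G) (h : IsRerouting G X m p j q) (hj : 1 ≤ j)
    (hjd : j ≤ d) (hdm : d + 2 < m) (ha : G.Adj (q (m - 1)) (q d)) :
    IsSealedEdge G X m q d :=
  ⟨by omega, .inr (h.isHamPath.not_isBoundary_of_chord hG (by omega) (by omega) (k := m - 1)
    (by omega) (by omega) (by omega) ha.symm),
    (h.isReroutedEnd_rotate hjd (by omega) ha).isSealed⟩

end IsRerouting

/-- The least total value of `n` requests that are made by a single end of a path, or by a part as a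
whole: each is worth at least one unit and one of them at least two, see
`IsRequestSystem.requestWeight_le_sum`. -/
def requestWeight (n : ℕ) : ℕ := if n = 0 then 0 else n + 1

/-- There are boundary vertices with property `E` and sealed edges of `p` from index `j` on whose
total value is at least `k`. -/
def Yields (G : SimpleGraph V) (X : Finset V) (m : ℕ) (p : ℕ → V) (E : V → Prop) (j k : ℕ) :
    Prop :=
  ∃ (S : Finset V) (T : Finset ℕ), (∀ w ∈ S, E w ∧ IsBoundary G X w) ∧
    (∀ i ∈ T, j ≤ i ∧ IsSealedEdge G X m p i) ∧ k ≤ T.card + requestWeight S.card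

theorem yields_four_of_edges {E : V → Prop} {a b c : ℕ} (hj : IsSealedEdge G X m p j)
    (ha : IsSealedEdge G X m p a) (hb : IsSealedEdge G X m p b) (hc : IsSealedEdge G X m p c)
    (hja : j < a) (hjb : j < b) (hjc : j < c) (hab : a ≠ b) (hac : a ≠ c) (hbc : b ≠ c) :
    Yields G X m p E j 4 := by
  refine ⟨∅, {j, a, b, c}, by simp, ?_, ?_⟩
  · simp only [Finset.forall_mem_insert, Finset.mem_singleton, forall_eq]
    exact ⟨⟨le_rfl, hj⟩, ⟨hja.le, ha⟩, ⟨hjb.le, hb⟩, ⟨hjc.le, hc⟩⟩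
  · simp [hja.ne, hjb.ne, hjc.ne, hab, hac, hbc]

theorem yields_four_of_edge_of_boundary {E : V → Prop} {a : ℕ} {w : V}
    (hj : IsSealedEdge G X m p j) (ha : IsSealedEdge G X m p a) (hja : j < a) (hw : E w)
    (hwX : IsBoundary G X w) : Yields G X m p E j 4 := by
  refine ⟨{w}, {j, a}, by simp [hw, hwX], ?_, ?_⟩
  · simp only [Finset.forall_mem_insert, Finset.mem_singleton, forall_eq]
    exact ⟨⟨le_rfl, hj⟩, hja.le, ha⟩
  · simp [Finset.card_pair hja.ne, requestWeight]

theorem yields_four_of_boundaries {E : V → Prop} {v w : V} (hj : IsSealedEdge G X m p j)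
    (hvw : v ≠ w) (hv : E v) (hvX : IsBoundary G X v) (hw : E w) (hwX : IsBoundary G X w) :
    Yields G X m p E j 4 := by
  classical
  exact ⟨{v, w}, {j}, by simp [hv, hvX, hw, hwX], by simp [hj],
    by simp [Finset.card_pair hvw, requestWeight]⟩

/-- The last vertex of the path `p` is joined to `p j`, and no rerouting beyond `j` has an end with
a neighbour before `p j`. -/
structure IsLobe (G : SimpleGraph V) (X : Finset V) (m : ℕ) (p : ℕ → V) (j : ℕ) : Prop where
  isHamPath : IsHamPath G X m p
  pos : 1 ≤ j
  lt : j + 2 < m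
  adj : G.Adj (p (m - 1)) (p j)
  not_adj : ∀ q, IsRerouting G X m p j q → ∀ i < j, ¬ G.Adj (q (m - 1)) (p i)

namespace IsLobe

variable (h : IsLobe G X m p j)

include h

theorem isRerouting : IsRerouting G X m p j p := h.isHamPath.isRerouting j

theorem isReroutedEnd_last : IsReroutedEnd G X m p j (p (m - 1)) := h.isRerouting.isReroutedEnd

theorem isReroutedEnd_succ : IsReroutedEnd G X m p j (p (j + 1)) :=
  h.isRerouting.isReroutedEnd_rotate le_rfl (by have := h.lt; omega) h.adj

theorem rotate : IsLobe G X m (posaRotate p m j) j := by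
  have hlt := h.lt
  have hrot := h.isRerouting.rotate le_rfl (by omega) h.adj
  refine ⟨hrot.isHamPath, h.pos, hlt, ?_, fun q hq i hi => ?_⟩
  · rw [posaRotate_of_add_eq (k := j + 1) (by omega) (by omega), posaRotate_of_le le_rfl]
    exact (h.isHamPath.adj_succ (by omega)).symm
  · rw [posaRotate_of_le hi.le]
    exact h.not_adj q (hq.trans hrot) i hi

variable (hG : IsCubic G)

include hG

theorem isSealedEdge_root : IsSealedEdge G X m p j := by
  have hpos := h.pos
  have hlt := h.lt
  exact ⟨by omega, .inr (h.isHamPath.not_isBoundary_of_chord hG (by omega) (by omega)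
    (k := m - 1) (by omega) (by omega) (by omega) h.adj.symm), h.isReroutedEnd_succ.isSealed⟩

theorem exists_chord_last (hb : ¬ IsBoundary G X (p (m - 1))) :
    ∃ d, j < d ∧ d + 2 < m ∧ G.Adj (p (m - 1)) (p d) := by
  obtain ⟨d, hd, hd1, hdj, ha⟩ := h.isHamPath.exists_third hG hb (m - 2) j
  have hd' : d ≠ m - 1 := fun e => ha.ne (by rw [e])
  have hjd : ¬ d < j := fun hlt => h.not_adj p h.isRerouting d hlt ha
  exact ⟨d, by omega, by omega, ha⟩

theorem exists_chord_succ (hb : ¬ IsBoundary G X (p (j + 1))) :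
    ∃ e, j + 3 ≤ e ∧ e < m ∧ G.Adj (p (j + 1)) (p e) := by
  have hlt := h.lt
  have hlast : posaRotate p m j (m - 1) = p (j + 1) :=
    posaRotate_of_add_eq (by omega) (by omega)
  obtain ⟨d, hjd, hdm, ha⟩ := h.rotate.exists_chord_last hG (by rwa [hlast])
  rw [hlast, posaRotate_of_lt hjd] at ha
  exact ⟨_, by omega, by omega, ha⟩

theorem isSealedEdge_of_chord_last (hjd : j < d) (hdm : d + 2 < m)
    (ha : G.Adj (p (m - 1)) (p d)) : IsSealedEdge G X m p d :=
  h.isRerouting.isSealedEdge_of_chord hG h.pos hjd.le hdm ha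

theorem isSealedEdge_of_chord_succ {e : ℕ} (hje : j + 3 ≤ e) (hem : e < m)
    (ha : G.Adj (p (j + 1)) (p e)) : IsSealedEdge G X m p (e - 1) := by
  have hsealed := h.rotate.isSealedEdge_of_chord_last hG (d := m + j - e) (by omega) (by omega) (by
    rwa [posaRotate_of_add_eq (k := j + 1) (by omega) (by omega),
      posaRotate_of_add_eq (k := e) (by omega) (by omega)])
  have hl := hsealed.left
  have hr := hsealed.right
  rw [posaRotate_of_add_eq (k := e) (by omega) (by omega)] at hl
  rw [posaRotate_of_add_eq (k := e - 1) (by omega) (by omega)] at hr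
  exact ⟨by omega, hr, by rwa [Nat.sub_add_cancel (by omega)]⟩

theorem yields_of_isBoundary_last (hb : IsBoundary G X (p (m - 1))) :
    Yields G X m p (IsReroutedEnd G X m p j) j 4 := by
  have hlt := h.lt
  by_cases hb' : IsBoundary G X (p (j + 1))
  · exact yields_four_of_boundaries (h.isSealedEdge_root hG)
      (h.isHamPath.ne (by omega) (by omega) (by omega)) h.isReroutedEnd_last hb
      h.isReroutedEnd_succ hb'
  · obtain ⟨e, hje, hem, ha⟩ := h.exists_chord_succ hG hb'
    exact yields_four_of_edge_of_boundary (h.isSealedEdge_root hG)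
      (h.isSealedEdge_of_chord_succ hG hje hem ha) (by omega) h.isReroutedEnd_last hb

theorem eq_of_adj_last {c : ℕ} (hjd : j < d) (hdm : d + 2 < m)
    (hd : G.Adj (p (m - 1)) (p d)) (hc : c < m) (ha : G.Adj (p (m - 1)) (p c)) :
    c = m - 2 ∨ c = j ∨ c = d :=
  h.isHamPath.eq_or_eq_or_eq_of_adj hG
    (h.isHamPath.adj_of_eq (i := m - 2) (by omega) (by omega)).symm h.adj hd (by omega) (by omega)
    (by omega) (by omega) (by omega) (by omega) hc ha

theorem exists_chord_of_chord_last (hjd : j < d) (hdm : d + 2 < m)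
    (hd : G.Adj (p (m - 1)) (p d)) (hb : ¬ IsBoundary G X (p (d + 1))) :
    ∃ g, j < g ∧ g + 1 < m ∧ (g < d ∨ d + 3 ≤ g) ∧ G.Adj (p (d + 1)) (p g) := by
  have hpos := h.pos
  obtain ⟨g, hg, hgd, hgd2, ha⟩ := h.isHamPath.exists_third hG hb d (d + 2)
  have hgd1 : g ≠ d + 1 := fun e => ha.ne (by rw [e])
  have hjg : ¬ g < j := fun hlt => by
    refine h.not_adj _ (h.isRerouting.rotate hjd.le (by omega) hd) g hlt ?_
    rwa [posaRotate_of_add_eq (k := d + 1) (by omega) (by omega)]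
  have hgj : g ≠ j := by
    rintro rfl
    have := h.isHamPath.eq_of_chord hG (by omega) (by omega) (k := m - 1) (by omega) (by omega)
      (by omega) h.adj.symm (by omega) ha.symm
    omega
  have hgm : g ≠ m - 1 := by
    rintro rfl
    have := h.eq_of_adj_last hG hjd hdm hd (by omega) ha.symm
    omega
  exact ⟨g, by omega, by omega, by omega, ha⟩

theorem yields_of_chord_succ_eq (hjd : j + 2 ≤ d) (hdm : d + 2 < m)
    (hd : G.Adj (p (m - 1)) (p d)) (ha : G.Adj (p (j + 1)) (p (d + 1))) :
    Yields G X m p (IsReroutedEnd G X m p j) j 4 := by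
  have hsucc := h.isRerouting.isReroutedEnd_rotate_low (e := j + 1) (by omega) (by omega)
    (by omega) hd ha.symm
  have hpred := (h.isRerouting.rotate le_rfl (by omega) h.adj).isReroutedEnd_rotate_low
    (d := m + j - (d + 1)) (e := j + 1) (by omega) (by omega) (by omega)
    (by rwa [posaRotate_of_add_eq (k := j + 1) (by omega) (by omega),
      posaRotate_of_add_eq (k := d + 1) (by omega) (by omega)])
    (by rw [posaRotate_of_add_eq (k := d) (by omega) (by omega),
          posaRotate_of_add_eq (k := m - 1) (by omega) (by omega)]
        exact hd.symm)
  rw [posaRotate_of_add_eq (k := m - 2) (by omega) (by omega)] at hpred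
  have hfirst : IsSealedEdge G X m p (j + 1) :=
    ⟨by omega, h.isReroutedEnd_succ.isSealed, hsucc.isSealed⟩
  have hlast : IsSealedEdge G X m p (m - 2) :=
    ⟨by omega, hpred.isSealed, by
      rw [show m - 2 + 1 = m - 1 by omega]
      exact h.isReroutedEnd_last.isSealed⟩
  exact yields_four_of_edges (h.isSealedEdge_root hG) hfirst
    (h.isSealedEdge_of_chord_last hG (by omega) hdm hd) hlast (by omega) (by omega) (by omega)
    (by omega) (by omega) (by omega)

theorem yields_of_chord_high {e g : ℕ} (hjd : j < d) (hd : G.Adj (p (m - 1)) (p d))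
    (hje : j + 3 ≤ e) (hem : e < m) (he : G.Adj (p (j + 1)) (p e)) (hed : e ≠ d + 1)
    (hdg : d + 3 ≤ g) (hgm : g + 1 < m) (hg : G.Adj (p (d + 1)) (p g)) :
    Yields G X m p (IsReroutedEnd G X m p j) j 4 := by
  have hpred := h.isRerouting.isReroutedEnd_rotate_high hjd.le hdg (by omega) hd hg
  have hgX := h.isHamPath.not_isBoundary_of_chord hG (i := g) (by omega) hgm (by omega) (by omega)
    (by omega) hg.symm
  have hedge : IsSealedEdge G X m p (g - 1) :=
    ⟨by omega, hpred.isSealed, .inr (by rwa [Nat.sub_add_cancel (by omega)])⟩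
  have hge : g ≠ e := by
    rintro rfl
    have := h.isHamPath.eq_of_chord hG (by omega) hgm (by omega) (by omega) (by omega) hg.symm
      (by omega) he.symm
    omega
  exact yields_four_of_edges (h.isSealedEdge_root hG) hedge
    (h.isSealedEdge_of_chord_last hG hjd (by omega) hd) (h.isSealedEdge_of_chord_succ hG hje hem he)
    (by omega) (by omega) (by omega) (by omega) (by omega) (by omega)

theorem yields_of_chord_low {e g : ℕ} (hdm : d + 2 < m) (hd : G.Adj (p (m - 1)) (p d))
    (hje : j + 3 ≤ e) (hem : e < m) (he : G.Adj (p (j + 1)) (p e)) (hed : e ≠ d + 1)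
    (hjg : j + 2 ≤ g) (hgd : g < d) (hg : G.Adj (p (d + 1)) (p g)) :
    Yields G X m p (IsReroutedEnd G X m p j) j 4 := by
  have hrot := h.isRerouting.rotate (d := d) (by omega) (by omega) hd
  have hlast : posaRotate p m d (m - 1) = p (d + 1) :=
    posaRotate_of_add_eq (by omega) (by omega)
  have hsealed_d := h.isSealedEdge_of_chord_last hG (by omega) hdm hd
  have hsealed_e := h.isSealedEdge_of_chord_succ hG hje hem he
  by_cases hge : g = e - 1
  · have hend := hrot.isReroutedEnd_rotate_low (d := g) (e := j + 1) (by omega) (by omega)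
      (by omega) (by rwa [hlast, posaRotate_of_le (by omega)])
      (by rw [posaRotate_of_le (by omega), posaRotate_of_le (by omega), hge,
            Nat.sub_add_cancel (by omega)]
          exact he.symm)
    rw [posaRotate_of_le (by omega)] at hend
    have hedge : IsSealedEdge G X m p (j + 1) :=
      ⟨by omega, h.isReroutedEnd_succ.isSealed, hend.isSealed⟩
    exact yields_four_of_edges (h.isSealedEdge_root hG) hedge hsealed_d hsealed_e (by omega)
      (by omega) (by omega) (by omega) (by omega) (by omega)
  · have hend := h.isRerouting.isReroutedEnd_rotate_low (by omega) hgd (by omega) hd hg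
    have hgX := h.isHamPath.not_isBoundary_of_chord hG (i := g) (by omega) (by omega) (by omega)
      (by omega) (by omega) hg.symm
    exact yields_four_of_edges (h.isSealedEdge_root hG)
      ⟨by omega, .inr hgX, hend.isSealed⟩ hsealed_d hsealed_e (by omega)
      (by omega) (by omega) (by omega) (by omega) (by omega)

theorem yields : Yields G X m p (IsReroutedEnd G X m p j) j 4 := by
  have hpos := h.pos
  by_cases hb : IsBoundary G X (p (m - 1))
  · exact h.yields_of_isBoundary_last hG hb
  obtain ⟨d, hjd, hdm, hd⟩ := h.exists_chord_last hG hb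
  have hsealed_d := h.isSealedEdge_of_chord_last hG hjd hdm hd
  by_cases hb' : IsBoundary G X (p (j + 1))
  · exact yields_four_of_edge_of_boundary (h.isSealedEdge_root hG) hsealed_d hjd
      h.isReroutedEnd_succ hb'
  obtain ⟨e, hje, hem, he⟩ := h.exists_chord_succ hG hb'
  obtain rfl | hed := eq_or_ne e (d + 1)
  · exact h.yields_of_chord_succ_eq hG (by omega) hdm hd he
  by_cases hbd : IsBoundary G X (p (d + 1))
  · exact yields_four_of_edge_of_boundary (h.isSealedEdge_root hG) hsealed_d hjd
      (h.isRerouting.isReroutedEnd_rotate hjd.le (by omega) hd) hbd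
  obtain ⟨g, hjg, hgm, hgd | hgd, hg⟩ := h.exists_chord_of_chord_last hG hjd hdm hd hbd
  · have hgj : g ≠ j + 1 := by
      rintro rfl
      have := h.isHamPath.eq_of_chord hG (by omega) hgm hem (by omega) (by omega) he (by omega)
        hg.symm
      omega
    exact h.yields_of_chord_low hG hdm hd hje hem he hed (by omega) hgd hg
  · exact h.yields_of_chord_high hG hjd hd hje hem he hed hgd hgm hg

end IsLobe

end Lobe

section Theta

variable {V : Type*} {G : SimpleGraph V} {X : Finset V} {m : ℕ} {p : ℕ → V}

open Classical in
/-- The indices of the sealed edges of the path `p 0, …, p (m - 1)`. -/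
noncomputable def sealedEdges (G : SimpleGraph V) (X : Finset V) (m : ℕ) (p : ℕ → V) : Finset ℕ :=
  {i ∈ Finset.range m | IsSealedEdge G X m p i}

theorem mem_sealedEdges {i : ℕ} : i ∈ sealedEdges G X m p ↔ IsSealedEdge G X m p i := by
  simp only [sealedEdges, Finset.mem_filter, Finset.mem_range, and_iff_right_iff_imp]
  exact fun h => by have := h.lt; omega

theorem IsSealedEdge.of_reverse {i : ℕ} (h : IsSealedEdge G X m (fun i => p (m - 1 - i)) i) :
    IsSealedEdge G X m p (m - 2 - i) := by
  have hlt := h.lt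
  refine ⟨by omega, ?_, ?_⟩
  · rw [show m - 2 - i = m - 1 - (i + 1) by omega]
    exact h.right
  · rw [show m - 2 - i + 1 = m - 1 - i by omega]
    exact h.left

theorem eq_or_eq_or_eq_of_fin_three {a b c : Fin 3} (hab : a ≠ b) (hac : a ≠ c) (hbc : b ≠ c)
    (k : Fin 3) : k = a ∨ k = b ∨ k = c := by
  omega

theorem exists_ne_ne_fin_three {a b : Fin 3} (hab : a ≠ b) : ∃ c, a ≠ c ∧ b ≠ c := by
  revert a b
  decide

theorem exists_pair_ne_fin_three (k : Fin 3) : ∃ a b : Fin 3, a ≠ b ∧ a ≠ k ∧ b ≠ k := by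
  revert k
  decide

theorem sum_fin_three (F : Fin 3 → ℕ) {a b c : Fin 3} (hab : a ≠ b) (hac : a ≠ c) (hbc : b ≠ c) :
    ∑ k, F k = F a + F b + F c := by
  have huniv : (Finset.univ : Finset (Fin 3)) = {a, b, c} := by
    ext k
    simpa using eq_or_eq_or_eq_of_fin_three hab hac hbc k
  rw [huniv, Finset.sum_insert (by simp [hab, hac]), Finset.sum_pair hbc, add_assoc]

/-- `X` is spanned by a theta graph in `G`: two branch vertices `s` and `t` joined by three paths,
the `k`-th of which has the inner vertices `f k 0, …, f k (l k - 1)`, listed from `s` to `t`. -/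
structure IsTheta (G : SimpleGraph V) (X : Finset V) (s t : V) (l : Fin 3 → ℕ)
    (f : Fin 3 → ℕ → V) : Prop where
  pos : ∀ k, 0 < l k
  inj : ∀ ⦃k i k' i'⦄, i < l k → i' < l k' → f k i = f k' i' → k = k' ∧ i = i'
  adj_succ : ∀ ⦃k i⦄, i + 1 < l k → G.Adj (f k i) (f k (i + 1))
  adj_left : ∀ k, G.Adj s (f k 0)
  adj_right : ∀ k, G.Adj t (f k (l k - 1))
  left_ne_right : s ≠ t
  ne_left : ∀ ⦃k i⦄, i < l k → f k i ≠ s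
  ne_right : ∀ ⦃k i⦄, i < l k → f k i ≠ t
  mem_iff : ∀ v, v ∈ X ↔ v = s ∨ v = t ∨ ∃ k, ∃ i < l k, f k i = v

/-- The Hamiltonian path of a theta graph that traverses segment `a` backwards, then `s`,
segment `b`, `t`, and finally segment `c` backwards. -/
def thetaPath (s t : V) (l : Fin 3 → ℕ) (f : Fin 3 → ℕ → V) (a b c : Fin 3) (i : ℕ) : V :=
  if i < l a then f a (l a - 1 - i)
  else if i = l a then s
  else if i < l a + 1 + l b then f b (i - l a - 1)
  else if i = l a + 1 + l b then t
  else f c (l a + l b + l c + 1 - i)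

section thetaPath

variable {s t : V} {l : Fin 3 → ℕ} {f : Fin 3 → ℕ → V} {a b c : Fin 3} {i n : ℕ}

theorem thetaPath_first (hn : n + i + 1 = l a) : thetaPath s t l f a b c n = f a i := by
  rw [thetaPath, if_pos (by omega)]
  congr 1
  omega

theorem thetaPath_left : thetaPath s t l f a b c (l a) = s := by
  simp [thetaPath]

theorem thetaPath_middle (hi : i < l b) (hn : n = l a + 1 + i) :
    thetaPath s t l f a b c n = f b i := by
  rw [thetaPath, if_neg (by omega), if_neg (by omega), if_pos (by omega)]
  congr 1
  omega

theorem thetaPath_right (hn : n = l a + 1 + l b) : thetaPath s t l f a b c n = t := by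
  rw [thetaPath, if_neg (by omega), if_neg (by omega), if_neg (by omega), if_pos hn]

theorem thetaPath_last (hi : i < l c) (hn : n + i = l a + l b + l c + 1) :
    thetaPath s t l f a b c n = f c i := by
  rw [thetaPath, if_neg (by omega), if_neg (by omega), if_neg (by omega), if_neg (by omega)]
  congr 1
  omega

end thetaPath

namespace IsTheta

variable {s t : V} {l : Fin 3 → ℕ} {f : Fin 3 → ℕ → V} (h : IsTheta G X s t l f)

include h

theorem apply_mem {k : Fin 3} {i : ℕ} (hi : i < l k) : f k i ∈ X :=
  (h.mem_iff _).2 (.inr (.inr ⟨k, i, hi, rfl⟩))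

theorem apply_ne {k k' : Fin 3} {i i' : ℕ} (hi : i < l k) (hi' : i' < l k')
    (hne : ¬ (k = k' ∧ i = i')) : f k i ≠ f k' i' :=
  fun e => hne (h.inj hi hi' e)

theorem adj_pred {k : Fin 3} {i : ℕ} (h0 : 0 < i) (hi : i < l k) :
    G.Adj (f k i) (f k (i - 1)) := by
  have := (h.adj_succ (k := k) (i := i - 1) (by omega)).symm
  rwa [Nat.sub_add_cancel h0] at this

theorem flip : IsTheta G X t s l fun k i => f k (l k - 1 - i) where
  pos := h.pos
  inj k i k' i' hi hi' e := by
    obtain ⟨rfl, he⟩ := h.inj (by omega) (by omega) e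
    exact ⟨rfl, by omega⟩
  adj_succ k i hi := by
    rw [Nat.sub_add_eq]
    exact h.adj_pred (by omega) (by omega)
  adj_left k := h.adj_right k
  adj_right k := by simpa using h.adj_left k
  left_ne_right := h.left_ne_right.symm
  ne_left k i hi := h.ne_right (by omega)
  ne_right k i hi := h.ne_left (by omega)
  mem_iff v := by
    have hflip : (∃ k, ∃ i < l k, f k i = v) ↔ ∃ k, ∃ i < l k, f k (l k - 1 - i) = v := by
      constructor
      · rintro ⟨k, i, hi, rfl⟩
        exact ⟨k, l k - 1 - i, by omega, by congr 1; omega⟩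
      · rintro ⟨k, i, hi, rfl⟩
        exact ⟨k, l k - 1 - i, by omega, rfl⟩
    rw [h.mem_iff v, ← hflip]
    tauto

section hamPath

variable {a b c : Fin 3} (hab : a ≠ b) (hac : a ≠ c) (hbc : b ≠ c)

include hab hac hbc

theorem thetaPath_inj {i j : ℕ} (hi : i < l a + l b + l c + 2) (hj : j < l a + l b + l c + 2)
    (e : thetaPath s t l f a b c i = thetaPath s t l f a b c j) : i = j := by
  simp only [thetaPath] at e
  split_ifs at e <;>
    first
    | omega
    | exact absurd e (h.ne_left (by omega))
    | exact absurd e (h.ne_right (by omega))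
    | exact absurd e.symm (h.ne_left (by omega))
    | exact absurd e.symm (h.ne_right (by omega))
    | exact absurd e h.left_ne_right
    | exact absurd e.symm h.left_ne_right
    | (have := h.inj (by omega) (by omega) e; omega)

omit hab hac hbc in
theorem adj_thetaPath_succ {i : ℕ} (hi : i + 1 < l a + l b + l c + 2) :
    G.Adj (thetaPath s t l f a b c i) (thetaPath s t l f a b c (i + 1)) := by
  have hb := h.pos b
  have hc := h.pos c
  have hsucc : ∀ k x y, y = x + 1 → y < l k → G.Adj (f k x) (f k y) := by
    rintro k x y rfl hy
    exact h.adj_succ hy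
  have hleft : ∀ k x, x = 0 → G.Adj s (f k x) := by
    rintro k x rfl
    exact h.adj_left k
  have hright : ∀ k x, x = l k - 1 → G.Adj t (f k x) := by
    rintro k x rfl
    exact h.adj_right k
  simp only [thetaPath]
  split_ifs <;>
    first
    | omega
    | exact hsucc _ _ _ (by omega) (by omega)
    | exact (hsucc _ _ _ (by omega) (by omega)).symm
    | exact hleft _ _ (by omega)
    | exact hright _ _ (by omega)
    | exact (hleft _ _ (by omega)).symm
    | exact (hright _ _ (by omega)).symm

theorem mem_iff_exists_thetaPath (v : V) :
    v ∈ X ↔ ∃ i < l a + l b + l c + 2, thetaPath s t l f a b c i = v := by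
  rw [h.mem_iff v]
  constructor
  · rintro (rfl | rfl | ⟨k, i, hi, rfl⟩)
    · exact ⟨l a, by omega, thetaPath_left⟩
    · exact ⟨l a + 1 + l b, by omega, thetaPath_right rfl⟩
    · rcases eq_or_eq_or_eq_of_fin_three hab hac hbc k with rfl | rfl | rfl
      · exact ⟨l k - 1 - i, by omega, thetaPath_first (by omega)⟩
      · exact ⟨l a + 1 + i, by omega, thetaPath_middle hi rfl⟩
      · exact ⟨l a + l b + l k + 1 - i, by omega, thetaPath_last hi (by omega)⟩
  · rintro ⟨i, hi, rfl⟩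
    unfold thetaPath
    split_ifs
    · exact .inr (.inr ⟨a, _, by omega, rfl⟩)
    · exact .inl rfl
    · exact .inr (.inr ⟨b, _, by omega, rfl⟩)
    · exact .inr (.inl rfl)
    · exact .inr (.inr ⟨c, _, by omega, rfl⟩)

theorem isHamPath : IsHamPath G X (l a + l b + l c + 2) (thetaPath s t l f a b c) where
  pos := by omega
  inj _ _ := h.thetaPath_inj hab hac hbc
  adj_succ _ := h.adj_thetaPath_succ
  mem_iff := h.mem_iff_exists_thetaPath hab hac hbc

end hamPath

theorem exists_isHamPath (k : Fin 3) :
    ∃ m q, IsHamPath G X m q ∧ l k + 4 ≤ m ∧ ∀ n i, i < l k → n + i + 1 = m → q n = f k i := by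
  obtain ⟨a, b, hab, hak, hbk⟩ := exists_pair_ne_fin_three k
  have ha := h.pos a
  have hb := h.pos b
  exact ⟨_, _, h.isHamPath hab hak hbk, by omega,
    fun n i hi hn => thetaPath_last hi (by omega)⟩

theorem isHamEnd_left (k : Fin 3) : IsHamEnd G X (f k 0) := by
  obtain ⟨m, q, hq, hm, hval⟩ := h.exists_isHamPath k
  rw [← hval (m - 1) 0 (h.pos k) (by omega)]
  exact hq.isHamEnd_last

theorem isHamEnd_right (k : Fin 3) : IsHamEnd G X (f k (l k - 1)) := h.flip.isHamEnd_left k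

theorem not_adj_right_left (hX : ¬ HomTraceable G X) {k k' : Fin 3} (hk : k ≠ k') :
    ¬ G.Adj (f k (l k - 1)) (f k' 0) := by
  intro ha
  obtain ⟨r, hkr, hkr'⟩ := exists_ne_ne_fin_three hk
  have hk0 := h.pos k
  refine hX ((h.isHamPath hkr hk hkr'.symm).homTraceable_of_adj ?_)
  rw [thetaPath_last (i := 0) (h.pos k') (by omega), thetaPath_first (i := l k - 1) (by omega)]
  exact ha.symm

theorem isHamEnd_succ_of_adj_left {k k' : Fin 3} (hk : k ≠ k') {c : ℕ} (hc : c + 1 < l k)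
    (ha : G.Adj (f k' 0) (f k c)) : IsHamEnd G X (f k (c + 1)) := by
  obtain ⟨r, hrk, hrk'⟩ := exists_ne_ne_fin_three hk
  have hk0 := h.pos k'
  have hrot := ((h.isHamPath hrk.symm hrk'.symm hk).isRerouting 0).isReroutedEnd_rotate
    (d := l r + 1 + c) (by omega) (by omega) (by
      rwa [thetaPath_last (i := 0) hk0 (by omega), thetaPath_middle (i := c) (by omega) rfl])
  rw [thetaPath_middle hc (by omega)] at hrot
  exact hrot.isHamEnd

theorem isHamEnd_pred_of_adj_left {k k' : Fin 3} (hk : k ≠ k') {c : ℕ} (h0 : 0 < c)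
    (hc : c < l k) (ha : G.Adj (f k' 0) (f k c)) : IsHamEnd G X (f k (c - 1)) := by
  obtain ⟨r, hrk, hrk'⟩ := exists_ne_ne_fin_three hk
  have hk0 := h.pos k'
  have hrot := ((h.isHamPath hrk hk hrk'.symm).isRerouting 0).isReroutedEnd_rotate
    (d := l k - 1 - c) (by omega) (by omega) (by
      rwa [thetaPath_last (i := 0) hk0 (by omega), thetaPath_first (i := c) (by omega)])
  rw [thetaPath_first (i := c - 1) (by omega)] at hrot
  exact hrot.isHamEnd

theorem isHamEnd_pred_of_chord {k : Fin 3} {c : ℕ} (h0 : 0 < c) (hc : c < l k)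
    (ha : G.Adj (f k 0) (f k c)) : IsHamEnd G X (f k (c - 1)) := by
  obtain ⟨m, q, hq, hm, hval⟩ := h.exists_isHamPath k
  have hrot := (hq.isRerouting 0).isReroutedEnd_rotate (d := m - 1 - c) (by omega) (by omega)
    (by rwa [hval _ 0 (h.pos k) (by omega), hval _ c hc (by omega)])
  rw [hval _ (c - 1) (by omega) (by omega)] at hrot
  exact hrot.isHamEnd

theorem isHamEnd_of_crossing_chords {k : Fin 3} {c : ℕ} (h0 : 0 < c) (hc : c + 1 < l k)
    (ha : G.Adj (f k 0) (f k c)) (hb : G.Adj (f k (l k - 1)) (f k (c - 1))) :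
    IsHamEnd G X (f k (l k - 2)) := by
  obtain ⟨m, q, hq, hm, hval⟩ := h.exists_isHamPath k
  have hrot := (hq.isRerouting 0).isReroutedEnd_rotate_low (d := m - 1 - c) (e := m - l k)
    (by omega) (by omega) (by omega)
    (by rwa [hval _ 0 (h.pos k) (by omega), hval _ c (by omega) (by omega)])
    (by rw [hval _ (c - 1) (by omega) (by omega), hval _ (l k - 1) (by omega) (by omega)]
        exact hb.symm)
  rw [hval _ (l k - 2) (by omega) (by omega)] at hrot
  exact hrot.isHamEnd

end IsTheta

end Theta

section ThetaInterior

variable {V : Type*} {G : SimpleGraph V} {X : Finset V} {m : ℕ} {p : ℕ → V}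
  {s t : V} {l : Fin 3 → ℕ} {f : Fin 3 → ℕ → V}

/-- `x` is the first or the last inner vertex of the `k`-th segment of a theta graph. -/
def IsSegmentEnd (l : Fin 3 → ℕ) (f : Fin 3 → ℕ → V) (k : Fin 3) (x : V) : Prop :=
  x = f k 0 ∨ x = f k (l k - 1)

theorem isSegmentEnd_left (k : Fin 3) : IsSegmentEnd l f k (f k 0) := .inl rfl

theorem isSegmentEnd_right (k : Fin 3) : IsSegmentEnd l f k (f k (l k - 1)) := .inr rfl

theorem IsSegmentEnd.flip {k : Fin 3} {x : V} (h : IsSegmentEnd l f k x) :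
    IsSegmentEnd l (fun k i => f k (l k - 1 - i)) k x := by
  simpa [IsSegmentEnd, or_comm] using h

/-- An edge from the end `x` of segment `k` to an inner vertex of a different segment `e`, other
than the two ends of `e`. -/
structure IsCrossChord (G : SimpleGraph V) (l : Fin 3 → ℕ) (f : Fin 3 → ℕ → V) (k : Fin 3) (x : V)
    (e : Fin 3) (c : ℕ) : Prop where
  isSegmentEnd : IsSegmentEnd l f k x
  ne : e ≠ k
  pos : 0 < c
  lt : c + 1 < l e
  adj : G.Adj x (f e c)

theorem IsCrossChord.flip {k e : Fin 3} {x : V} {c : ℕ} (h : IsCrossChord G l f k x e c) :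
    IsCrossChord G l (fun k i => f k (l k - 1 - i)) k x e (l e - 1 - c) := by
  have hpos := h.pos
  have hlt := h.lt
  exact ⟨h.isSegmentEnd.flip, h.ne, by omega, by omega, by
    convert h.adj using 2
    omega⟩

/-- Some cross chord leaves the end `x` of segment `k`. -/
def HasCrossChord (G : SimpleGraph V) (l : Fin 3 → ℕ) (f : Fin 3 → ℕ → V) (k : Fin 3) (x : V) :
    Prop :=
  ∃ e c, IsCrossChord G l f k x e c

theorem hasCrossChord_of_flip {k : Fin 3} {x : V}
    (h : HasCrossChord G l (fun k i => f k (l k - 1 - i)) k x) : HasCrossChord G l f k x := by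
  obtain ⟨e, c, hc⟩ := h
  have hpos := hc.pos
  have hlt := hc.lt
  exact ⟨e, l e - 1 - c, by simpa [IsSegmentEnd, or_comm] using hc.isSegmentEnd, hc.ne, by omega,
    by omega, hc.adj⟩

theorem card_succ_le_card_of_pred_mem {S T : Finset ℕ} (hS : S.Nonempty)
    (h : ∀ c ∈ S, 0 < c ∧ c - 1 ∈ T ∧ c ∈ T) : S.card + 1 ≤ T.card := by
  have hmin := h _ (S.min'_mem hS)
  have hpred : S.min' hS - 1 ∉ S := fun hm => by
    have := S.min'_le _ hm
    omega
  rw [← Finset.card_insert_of_notMem hpred]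
  refine Finset.card_le_card (Finset.insert_subset hmin.2.1 fun c hc => (h c hc).2.2)

namespace IsTheta

variable (h : IsTheta G X s t l f)

include h

theorem exists_eq_of_isSegmentEnd {k : Fin 3} {x : V} (hx : IsSegmentEnd l f k x) :
    ∃ i < l k, x = f k i := by
  have hk := h.pos k
  rcases hx with rfl | rfl
  · exact ⟨0, hk, rfl⟩
  · exact ⟨l k - 1, by omega, rfl⟩

theorem isHamEnd_of_isSegmentEnd {k : Fin 3} {x : V} (hx : IsSegmentEnd l f k x) :
    IsHamEnd G X x := by
  rcases hx with rfl | rfl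
  · exact h.isHamEnd_left k
  · exact h.isHamEnd_right k

theorem ne_of_isSegmentEnd {k k' : Fin 3} {x y : V} (hx : IsSegmentEnd l f k x)
    (hy : IsSegmentEnd l f k' y) (hk : k ≠ k') : x ≠ y := by
  obtain ⟨i, hi, rfl⟩ := h.exists_eq_of_isSegmentEnd hx
  obtain ⟨j, hj, rfl⟩ := h.exists_eq_of_isSegmentEnd hy
  exact h.apply_ne hi hj fun e => hk e.1

theorem zero_mem_sealedEdges {k k' : Fin 3} (hk : k' ≠ k) (hlk : 2 ≤ l k)
    (ha : G.Adj (f k 0) (f k' 0)) : 0 ∈ sealedEdges G X (l k) (f k) :=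
  mem_sealedEdges.2 ⟨by omega, (h.isHamEnd_left k).isSealed,
    (h.isHamEnd_succ_of_adj_left hk.symm (by omega) ha.symm).isSealed⟩

theorem last_mem_sealedEdges {k k' : Fin 3} (hk : k' ≠ k) (hlk : 2 ≤ l k)
    (ha : G.Adj (f k (l k - 1)) (f k' (l k' - 1))) :
    l k - 2 ∈ sealedEdges G X (l k) (f k) :=
  mem_sealedEdges.2 (mem_sealedEdges.1 (h.flip.zero_mem_sealedEdges hk hlk ha)).of_reverse

variable (hG : IsCubic G)

include hG

theorem not_isBoundary_left : ¬ IsBoundary G X s :=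
  hG.not_isBoundary (h.adj_left 0) (h.adj_left 1) (h.adj_left 2)
    (h.apply_ne (h.pos _) (h.pos _) (by simp)) (h.apply_ne (h.pos _) (h.pos _) (by simp))
    (h.apply_ne (h.pos _) (h.pos _) (by simp)) (h.apply_mem (h.pos _)) (h.apply_mem (h.pos _))
    (h.apply_mem (h.pos _))

theorem eq_zero_of_adj_left {k : Fin 3} {i : ℕ} (hi : i < l k) (ha : G.Adj s (f k i)) : i = 0 := by
  have hs := hG.eq_or_eq_or_eq_of_adj (h.adj_left 0) (h.adj_left 1) (h.adj_left 2)
    (h.apply_ne (h.pos _) (h.pos _) (by simp)) (h.apply_ne (h.pos _) (h.pos _) (by simp))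
    (h.apply_ne (h.pos _) (h.pos _) (by simp)) ha
  rcases hs with e | e | e <;> exact (h.inj hi (h.pos _) e).2

theorem not_isBoundary_of_chord {k k' : Fin 3} {c i : ℕ} (h0 : 0 < c) (hc : c + 1 < l k)
    (hi : i < l k') (hne : k' = k → i ≠ c - 1 ∧ i ≠ c + 1) (ha : G.Adj (f k c) (f k' i)) :
    ¬ IsBoundary G X (f k c) :=
  hG.not_isBoundary (h.adj_pred h0 (by omega)) (h.adj_succ hc) ha
    (h.apply_ne (by omega) hc (by omega))
    (h.apply_ne (by omega) hi fun e => (hne e.1.symm).1 e.2.symm)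
    (h.apply_ne hc hi fun e => (hne e.1.symm).2 e.2.symm) (h.apply_mem (by omega))
    (h.apply_mem hc) (h.apply_mem hi)

theorem eq_of_adj_of_adj {k k' k'' : Fin 3} {c i j : ℕ} (h0 : 0 < c) (hc : c + 1 < l k)
    (hi : i < l k') (hj : j < l k'') (hne : k' = k → i ≠ c - 1 ∧ i ≠ c + 1)
    (hne' : k'' = k → j ≠ c - 1 ∧ j ≠ c + 1) (ha : G.Adj (f k c) (f k' i))
    (hb : G.Adj (f k c) (f k'' j)) : k'' = k' ∧ j = i := by
  rcases hG.eq_or_eq_or_eq_of_adj (h.adj_pred h0 (by omega)) (h.adj_succ hc) ha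
    (h.apply_ne (by omega) hc (by omega))
    (h.apply_ne (by omega) hi fun e => (hne e.1.symm).1 e.2.symm)
    (h.apply_ne hc hi fun e => (hne e.1.symm).2 e.2.symm) hb with e | e | e
  · have := h.inj hj (by omega) e
    exact absurd this.2 (hne' this.1).1
  · have := h.inj hj hc e
    exact absurd this.2 (hne' this.1).2
  · exact h.inj hj hi e

theorem exists_third_adj_left {k : Fin 3} (hb : ¬ IsBoundary G X (f k 0)) :
    ∃ k', ∃ c < l k', (k' = k → 2 ≤ c) ∧ G.Adj (f k 0) (f k' c) := by
  have hk := h.pos k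
  obtain ⟨w, hwX, hws, hwt, hw1, ha⟩ :
      ∃ w ∈ X, w ≠ s ∧ w ≠ t ∧ (2 ≤ l k → w ≠ f k 1) ∧ G.Adj (f k 0) w := by
    by_cases hlk : 2 ≤ l k
    · obtain ⟨w, hws, hw1, ha⟩ := hG.exists_adj_ne_ne (f k 0) s (f k 1)
      refine ⟨w, by_contra fun hw => hb ⟨w, ha, hw⟩, hws, ?_, fun _ => hw1, ha⟩
      rintro rfl
      have := h.flip.eq_zero_of_adj_left hG (k := k) (i := l k - 1) (by omega)
        (by simpa using ha.symm)
      omega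
    · obtain ⟨w, hws, hwt, ha⟩ := hG.exists_adj_ne_ne (f k 0) s t
      exact ⟨w, by_contra fun hw => hb ⟨w, ha, hw⟩, hws, hwt, fun h => absurd h hlk, ha⟩
  obtain ⟨k', c, hc, rfl⟩ := (((h.mem_iff w).1 hwX).resolve_left hws).resolve_left hwt
  refine ⟨k', c, hc, ?_, ha⟩
  rintro rfl
  have hc0 : c ≠ 0 := fun e => ha.ne (by rw [e])
  have hc1 : c ≠ 1 := fun e => hw1 (by omega) (by rw [e])
  omega

theorem pred_mem_sealedEdges_of_chord {k : Fin 3} {c : ℕ} (h2 : 2 ≤ c) (hc : c < l k)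
    (ha : G.Adj (f k 0) (f k c)) : c - 1 ∈ sealedEdges G X (l k) (f k) := by
  refine mem_sealedEdges.2 ⟨by omega, (h.isHamEnd_pred_of_chord (by omega) hc ha).isSealed, ?_⟩
  rw [Nat.sub_add_cancel (by omega)]
  by_cases hlast : c + 1 < l k
  · exact .inr (h.not_isBoundary_of_chord hG (by omega) hlast (h.pos k)
      (fun _ => ⟨by omega, by omega⟩) ha.symm)
  · obtain rfl : c = l k - 1 := by omega
    exact (h.isHamEnd_right k).isSealed

theorem mem_sealedEdges_of_isCrossChord {k e : Fin 3} {x : V} {c : ℕ}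
    (hx : IsCrossChord G l f k x e c) :
    c - 1 ∈ sealedEdges G X (l e) (f e) ∧ c ∈ sealedEdges G X (l e) (f e) := by
  wlog hxl : x = f k 0 generalizing f s t c
  · have hpos := hx.pos
    have hlt := hx.lt
    have hxr := hx.isSegmentEnd.resolve_left hxl
    obtain ⟨hm, hm'⟩ := this h.flip hx.flip (by simpa using hxr)
    have hm := (mem_sealedEdges.1 hm).of_reverse
    have hm' := (mem_sealedEdges.1 hm').of_reverse
    rw [show l e - 2 - (l e - 1 - c - 1) = c by omega] at hm
    rw [show l e - 2 - (l e - 1 - c) = c - 1 by omega] at hm'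
    exact ⟨mem_sealedEdges.2 hm', mem_sealedEdges.2 hm⟩
  obtain ⟨-, hek, hpos, hlt, ha⟩ := hx
  subst hxl
  have hc : ¬ IsBoundary G X (f e c) :=
    h.not_isBoundary_of_chord hG hpos hlt (h.pos k) (fun e' => absurd e'.symm hek) ha.symm
  refine ⟨mem_sealedEdges.2 ⟨by omega, ?_, ?_⟩, mem_sealedEdges.2 ⟨hlt, .inr hc, ?_⟩⟩
  · exact (h.isHamEnd_pred_of_adj_left hek hpos (by omega) ha).isSealed
  · rw [Nat.sub_add_cancel hpos]
    exact .inr hc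
  · exact (h.isHamEnd_succ_of_adj_left hek hlt ha).isSealed

theorem card_succ_le_card_sealedEdges {e : Fin 3} {S : Finset ℕ} (hS : S.Nonempty)
    (hcross : ∀ c ∈ S, ∃ k x, IsCrossChord G l f k x e c) :
    S.card + 1 ≤ (sealedEdges G X (l e) (f e)).card :=
  card_succ_le_card_of_pred_mem hS fun c hc => by
    obtain ⟨k, x, hx⟩ := hcross c hc
    exact ⟨hx.pos, h.mem_sealedEdges_of_isCrossChord hG hx⟩

theorem two_le_card_of_isCrossChord {k e : Fin 3} {x : V} {c : ℕ}
    (hx : IsCrossChord G l f k x e c) : 2 ≤ (sealedEdges G X (l e) (f e)).card :=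
  h.card_succ_le_card_sealedEdges hG (Finset.singleton_nonempty c)
    (by simpa using ⟨k, x, hx⟩)

theorem ne_of_isCrossChord {k k' e : Fin 3} {x y : V} {c d : ℕ} (hx : IsCrossChord G l f k x e c)
    (hy : IsCrossChord G l f k' y e d) (hxy : x ≠ y) : c ≠ d := by
  rintro rfl
  obtain ⟨i, hi, rfl⟩ := h.exists_eq_of_isSegmentEnd hx.isSegmentEnd
  obtain ⟨j, hj, rfl⟩ := h.exists_eq_of_isSegmentEnd hy.isSegmentEnd
  obtain ⟨rfl, rfl⟩ := h.eq_of_adj_of_adj hG hx.pos hx.lt hi hj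
    (fun e' => absurd e'.symm hx.ne) (fun e' => absurd e'.symm hy.ne) hx.adj.symm hy.adj.symm
  exact hxy rfl

variable (hX : ¬ HomTraceable G X)

include hX

theorem exists_mem_sealedEdges_left {k : Fin 3} (hb : ¬ IsBoundary G X (f k 0))
    (hcross : ¬ HasCrossChord G l f k (f k 0)) :
    ∃ i ∈ sealedEdges G X (l k) (f k),
      (i = 0 ∧ ∃ k' ≠ k, 2 ≤ l k' ∧ G.Adj (f k 0) (f k' 0)) ∨
      (1 ≤ i ∧ G.Adj (f k 0) (f k (i + 1))) := by
  obtain ⟨k', c, hc, hck, ha⟩ := h.exists_third_adj_left hG hb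
  obtain rfl | hk := eq_or_ne k' k
  · have h2 := hck rfl
    refine ⟨c - 1, h.pred_mem_sealedEdges_of_chord hG h2 hc ha, .inr ⟨by omega, ?_⟩⟩
    rwa [Nat.sub_add_cancel (by omega)]
  · have hlast : c ≠ l k' - 1 := fun e => h.not_adj_right_left hX hk (e ▸ ha.symm)
    obtain rfl : c = 0 := by
      by_contra hc0
      exact hcross ⟨k', c, isSegmentEnd_left k, hk, by omega, by omega, ha⟩
    have hlk : 2 ≤ l k := by
      by_contra hlk
      refine h.not_adj_right_left hX hk.symm ?_
      rwa [show l k - 1 = 0 by omega]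
    exact ⟨0, h.zero_mem_sealedEdges hk hlk ha, .inl ⟨rfl, k', hk, by omega, ha⟩⟩

theorem exists_mem_sealedEdges_right {k : Fin 3} (hb : ¬ IsBoundary G X (f k (l k - 1)))
    (hcross : ¬ HasCrossChord G l f k (f k (l k - 1))) :
    ∃ i ∈ sealedEdges G X (l k) (f k),
      (i = l k - 2 ∧ ∃ k' ≠ k, 2 ≤ l k' ∧ G.Adj (f k (l k - 1)) (f k' (l k' - 1))) ∨
      (i + 2 < l k ∧ G.Adj (f k (l k - 1)) (f k i)) := by
  obtain ⟨i, hi, hcase⟩ := h.flip.exists_mem_sealedEdges_left hG hX (k := k) (by simpa using hb)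
    (fun hc => hcross (by simpa using hasCrossChord_of_flip hc))
  have hlt := (mem_sealedEdges.1 hi).lt
  refine ⟨l k - 2 - i, mem_sealedEdges.2 (mem_sealedEdges.1 hi).of_reverse, ?_⟩
  rcases hcase with ⟨rfl, hpar⟩ | ⟨h1, ha⟩
  · exact .inl ⟨rfl, by simpa using hpar⟩
  · refine .inr ⟨by omega, ?_⟩
    rw [show l k - 2 - i = l k - 1 - (i + 1) by omega]
    simpa using ha

theorem one_le_card_of_not_hasCrossChord {k : Fin 3} {x : V} (hx : IsSegmentEnd l f k x)
    (hb : ¬ IsBoundary G X x) (hcross : ¬ HasCrossChord G l f k x) :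
    1 ≤ (sealedEdges G X (l k) (f k)).card := by
  rcases hx with rfl | rfl
  · obtain ⟨i, hi, -⟩ := h.exists_mem_sealedEdges_left hG hX hb hcross
    exact Finset.card_pos.2 ⟨i, hi⟩
  · obtain ⟨i, hi, -⟩ := h.exists_mem_sealedEdges_right hG hX hb hcross
    exact Finset.card_pos.2 ⟨i, hi⟩

omit hX in
theorem not_adj_right_of_adj_left {k k' : Fin 3} (hk : k' ≠ k) (hlk : 3 ≤ l k)
    (ha : G.Adj (f k 0) (f k' 0)) : ¬ G.Adj (f k 0) (f k (l k - 1)) := by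
  intro hb
  rcases hG.eq_or_eq_or_eq_of_adj (h.adj_left k).symm (h.adj_succ (by omega)) ha
    (h.ne_left (by omega)).symm (h.ne_left (h.pos _)).symm
    (h.apply_ne (by omega) (h.pos _) (by omega)) hb with e | e | e
  · exact h.ne_left (by omega) e
  · have := h.inj (by omega) (by omega) e
    omega
  · exact hk (h.inj (by omega) (h.pos _) e).1.symm

theorem two_le_card_of_not_hasCrossChord {k : Fin 3} (hlk : 3 ≤ l k)
    (hb : ∀ x, IsSegmentEnd l f k x → ¬ IsBoundary G X x)
    (hcross : ∀ x, IsSegmentEnd l f k x → ¬ HasCrossChord G l f k x) :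
    2 ≤ (sealedEdges G X (l k) (f k)).card := by
  obtain ⟨i, hi, hleft⟩ := h.exists_mem_sealedEdges_left hG hX (hb _ (isSegmentEnd_left k))
    (hcross _ (isSegmentEnd_left k))
  obtain ⟨j, hj, hright⟩ := h.exists_mem_sealedEdges_right hG hX (hb _ (isSegmentEnd_right k))
    (hcross _ (isSegmentEnd_right k))
  obtain hij | rfl := ne_or_eq i j
  · exact Finset.one_lt_card.2 ⟨i, hi, j, hj, hij⟩
  obtain ⟨hj1, ha⟩ : 1 ≤ i ∧ G.Adj (f k 0) (f k (i + 1)) := by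
    refine hleft.resolve_left ?_
    rintro ⟨rfl, k', hk', -, ha⟩
    rcases hright with ⟨hj2, -⟩ | ⟨-, hb⟩
    · omega
    · exact h.not_adj_right_of_adj_left hG hk' hlk ha hb.symm
  obtain ⟨hj2, hb⟩ : i + 2 < l k ∧ G.Adj (f k (l k - 1)) (f k i) := by
    refine hright.resolve_left ?_
    rintro ⟨hj2, k', hk', -, hb⟩
    rw [show i + 1 = l k - 1 by omega] at ha
    exact h.flip.not_adj_right_of_adj_left hG hk' hlk (by simpa using hb) (by simpa using ha.symm)
  have hend : IsHamEnd G X (f k (l k - 2)) :=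
    h.isHamEnd_of_crossing_chords (c := i + 1) (by omega) (by omega) ha hb
  refine Finset.one_lt_card.2 ⟨i, hi, l k - 2, mem_sealedEdges.2 ⟨by omega, hend.isSealed, ?_⟩,
    by omega⟩
  rw [show l k - 2 + 1 = l k - 1 by omega]
  exact (h.isHamEnd_right k).isSealed

end IsTheta

end ThetaInterior

section ThetaEnds

variable {V : Type*} {G : SimpleGraph V} {X : Finset V}
  {s t : V} {l : Fin 3 → ℕ} {f : Fin 3 → ℕ → V}

theorem four_le_card_of_mem {T : Finset ℕ} {a b c d : ℕ} (ha : a ∈ T) (hb : b ∈ T) (hc : c ∈ T)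
    (hd : d ∈ T) (hab : a < b) (hbc : b < c) (hcd : c < d) : 4 ≤ T.card := by
  have hsub : ({a, b, c, d} : Finset ℕ) ⊆ T := by
    simp [Finset.insert_subset_iff, ha, hb, hc, hd]
  have hcard : ({a, b, c, d} : Finset ℕ).card = 4 := by
    simp [hab.ne, hbc.ne, hcd.ne, (hab.trans hbc).ne, (hbc.trans hcd).ne,
      (hab.trans (hbc.trans hcd)).ne]
  exact hcard ▸ Finset.card_le_card hsub

namespace IsTheta

variable (h : IsTheta G X s t l f)

include h

theorem homTraceable_of_adj_of_adj {a b e : Fin 3} (hab : a ≠ b) (hae : a ≠ e) (hbe : b ≠ e)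
    (hla : l a = 1) (hlb : l b = 1) {c : ℕ} (hc : c + 2 < l e)
    (hb : G.Adj (f b 0) (f e (c + 1))) (he : G.Adj (f e 0) (f e (c + 2))) :
    HomTraceable G X := by
  have hp := h.isHamPath hab hae hbe
  have hlast : ∀ i n, i < l e → n + i = l e + 3 → thetaPath s t l f a b e n = f e i :=
    fun i n hi hn => thetaPath_last hi (by omega)
  have hb2 : thetaPath s t l f a b e 2 = f b 0 := thetaPath_middle (h.pos b) (by omega)
  have ht : thetaPath s t l f a b e 3 = t := thetaPath_right (by omega)
  have ha0 : thetaPath s t l f a b e 0 = f a 0 := thetaPath_first (by omega)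
  have hat := h.adj_right a
  rw [hla] at hat
  rw [hla, hlb, show 1 + 1 + l e + 2 = l e + 4 by omega] at hp
  have hp1 := hp.rotate (d := l e + 1 - c) (by omega) (by
    rwa [hlast 0 _ (by omega) (by omega), hlast (c + 2) _ (by omega) (by omega)])
  have hp2 := hp1.rotate (d := 2) (by omega) (by
    rw [posaRotate_of_add_eq (k := l e + 2 - c) (by omega) (by omega),
      posaRotate_of_le (by omega), hb2, hlast (c + 1) _ (by omega) (by omega)]
    exact hb.symm)
  refine hp2.homTraceable_of_adj ?_
  rwa [posaRotate_of_add_eq (k := 3) (by omega) (by omega), posaRotate_of_le (by omega),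
    posaRotate_of_le (by omega), posaRotate_of_le (by omega), ht, ha0]

variable (hG : IsCubic G)

include hG

theorem ne_of_isCrossChord_of_adj_left {k e : Fin 3} {x : V} {c d : ℕ}
    (hx : IsCrossChord G l f k x e c) (hd : 2 ≤ d) (ha : G.Adj (f e 0) (f e d)) : d ≠ c := by
  rintro rfl
  obtain ⟨i, hi, rfl⟩ := h.exists_eq_of_isSegmentEnd hx.isSegmentEnd
  have := h.eq_of_adj_of_adj hG hx.pos hx.lt hi (h.pos e) (fun e' => absurd e'.symm hx.ne)
    (fun _ => by omega) hx.adj.symm ha.symm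
  exact hx.ne this.1

theorem three_le_card_of_isCrossChord {k k' e : Fin 3} {x y : V} {c d : ℕ} (hxy : x ≠ y)
    (hx : IsCrossChord G l f k x e c) (hy : IsCrossChord G l f k' y e d) :
    3 ≤ (sealedEdges G X (l e) (f e)).card := by
  have hcard := h.card_succ_le_card_sealedEdges hG (e := e) (S := {c, d}) (by simp)
    (by simpa using ⟨⟨k, x, hx⟩, k', y, hy⟩)
  rwa [Finset.card_pair (h.ne_of_isCrossChord hG hx hy hxy)] at hcard

theorem four_le_card_of_isCrossChord {k k' k'' e : Fin 3} {x y z : V} {c d n : ℕ} (hxy : x ≠ y)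
    (hxz : x ≠ z) (hyz : y ≠ z) (hx : IsCrossChord G l f k x e c)
    (hy : IsCrossChord G l f k' y e d) (hz : IsCrossChord G l f k'' z e n) :
    4 ≤ (sealedEdges G X (l e) (f e)).card := by
  have hcard := h.card_succ_le_card_sealedEdges hG (e := e) (S := {c, d, n}) (by simp)
    (by simpa using ⟨⟨k, x, hx⟩, ⟨k', y, hy⟩, k'', z, hz⟩)
  have hcd := h.ne_of_isCrossChord hG hx hy hxy
  have hcn := h.ne_of_isCrossChord hG hx hz hxz
  have hdn := h.ne_of_isCrossChord hG hy hz hyz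
  simpa [hcd, hcn, hdn] using hcard

theorem four_le_sum_of_ne_of_isCrossChord {k k' e e' : Fin 3} {x y : V} {c d : ℕ} (he : e ≠ e')
    (hx : IsCrossChord G l f k x e c) (hy : IsCrossChord G l f k' y e' d) :
    4 ≤ ∑ k, (sealedEdges G X (l k) (f k)).card := by
  have hsum := Finset.add_le_sum (f := fun k => (sealedEdges G X (l k) (f k)).card)
    (fun _ _ => Nat.zero_le _) (Finset.mem_univ e) (Finset.mem_univ e') he
  have hle := h.two_le_card_of_isCrossChord hG hx
  have hle' := h.two_le_card_of_isCrossChord hG hy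
  omega

theorem exists_isBoundary_inner (hfree : ∀ k x, IsSegmentEnd l f k x → ¬ IsBoundary G X x)
    {o : V} (hoX : o ∈ X) (ho : IsBoundary G X o) :
    ∃ k i, 0 < i ∧ i + 1 < l k ∧ IsBoundary G X (f k i) := by
  rcases (h.mem_iff o).1 hoX with rfl | rfl | ⟨k, i, hi, rfl⟩
  · exact absurd ho (h.not_isBoundary_left hG)
  · exact absurd ho (h.flip.not_isBoundary_left hG)
  · refine ⟨k, i, ?_, ?_, ho⟩
    · rw [Nat.pos_iff_ne_zero]
      rintro rfl
      exact hfree k _ (isSegmentEnd_left k) ho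
    · by_contra hlast
      obtain rfl : i = l k - 1 := by omega
      exact hfree k _ (isSegmentEnd_right k) ho

variable (hX : ¬ HomTraceable G X)

include hX

theorem four_le_card_of_isCrossChord_of_length_eq_one {a b e : Fin 3} (hab : a ≠ b) (hla : l a = 1)
    (hlb : l b = 1) (hb : ¬ IsBoundary G X (f e 0)) (hcross : ¬ HasCrossChord G l f e (f e 0))
    {c d : ℕ} (hcd : c < d) (hc : IsCrossChord G l f a (f a 0) e c)
    (hd : IsCrossChord G l f b (f b 0) e d) : 4 ≤ (sealedEdges G X (l e) (f e)).card := by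
  obtain ⟨hc1, hc2⟩ := h.mem_sealedEdges_of_isCrossChord hG hc
  obtain ⟨hd1, hd2⟩ := h.mem_sealedEdges_of_isCrossChord hG hd
  have hpos := hc.pos
  obtain hlt | rfl : c + 1 < d ∨ d = c + 1 := by omega
  · exact four_le_card_of_mem hc1 hc2 hd1 hd2 (by omega) (by omega) (by omega)
  obtain ⟨i, hi, ⟨-, k, hk, hlk, -⟩ | ⟨hi1, ha⟩⟩ :=
    h.exists_mem_sealedEdges_left hG hX hb hcross
  · rcases eq_or_eq_or_eq_of_fin_three hab hc.ne.symm hd.ne.symm k with rfl | rfl | rfl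
    · omega
    · omega
    · exact absurd rfl hk
  · have hic := h.ne_of_isCrossChord_of_adj_left hG hc (by omega) ha
    have hid := h.ne_of_isCrossChord_of_adj_left hG hd (by omega) ha
    have hlt := (mem_sealedEdges.1 hi).lt
    have hic' : i ≠ c + 1 := by
      rintro rfl
      exact hX (h.homTraceable_of_adj_of_adj hab hc.ne.symm hd.ne.symm hla hlb hlt hd.adj ha)
    obtain hlow | hhigh : i < c - 1 ∨ c + 1 < i := by omega
    · exact four_le_card_of_mem hi hc1 hc2 hd2 hlow (by omega) (by omega)
    · exact four_le_card_of_mem hc1 hc2 hd2 hi (by omega) (by omega) hhigh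

theorem four_le_card_of_forall_isCrossChord {e : Fin 3} (hb : ¬ IsBoundary G X (f e 0))
    (hcross : ¬ HasCrossChord G l f e (f e 0))
    (hall : ∀ k ≠ e, ∀ x, IsSegmentEnd l f k x → ∃ c, IsCrossChord G l f k x e c) :
    4 ≤ (sealedEdges G X (l e) (f e)).card := by
  obtain ⟨a, b, hab, hae, hbe⟩ := exists_pair_ne_fin_three e
  have hne := h.ne_of_isSegmentEnd (isSegmentEnd_left a) (isSegmentEnd_left b) hab
  obtain ⟨c, hc⟩ := hall a hae _ (isSegmentEnd_left a)
  obtain ⟨d, hd⟩ := hall b hbe _ (isSegmentEnd_left b)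
  by_cases hk : ∃ k ≠ e, 2 ≤ l k
  · obtain ⟨k, hke, hlk⟩ := hk
    obtain ⟨n, hn⟩ := hall k hke _ (isSegmentEnd_right k)
    exact h.four_le_card_of_isCrossChord hG hne (h.apply_ne (h.pos a) (by omega) (by omega))
      (h.apply_ne (h.pos b) (by omega) (by omega)) hc hd hn
  · push Not at hk
    have hla : l a = 1 := by have := hk a hae; have := h.pos a; omega
    have hlb : l b = 1 := by have := hk b hbe; have := h.pos b; omega
    rcases (h.ne_of_isCrossChord hG hc hd hne).lt_or_gt with hcd | hdc
    · exact h.four_le_card_of_isCrossChord_of_length_eq_one hG hX hab hla hlb hb hcross hcd hc hd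
    · exact h.four_le_card_of_isCrossChord_of_length_eq_one hG hX hab.symm hlb hla hb hcross hdc
        hd hc

theorem two_le_length_of_not_hasCrossChord {k : Fin 3} (hb : ¬ IsBoundary G X (f k 0))
    (hcross : ¬ HasCrossChord G l f k (f k 0)) : 2 ≤ l k := by
  obtain ⟨i, hi, -⟩ := h.exists_mem_sealedEdges_left hG hX hb hcross
  have := (mem_sealedEdges.1 hi).lt
  omega

theorem exists_adj_left_of_length_eq_two {k : Fin 3} (hlk : l k = 2)
    (hb : ¬ IsBoundary G X (f k 0)) (hcross : ¬ HasCrossChord G l f k (f k 0)) :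
    ∃ k' ≠ k, 2 ≤ l k' ∧ G.Adj (f k' 0) (f k 0) := by
  obtain ⟨i, hi, ⟨-, k', hk', hlk', ha⟩ | ⟨hi1, -⟩⟩ :=
    h.exists_mem_sealedEdges_left hG hX hb hcross
  · exact ⟨k', hk', hlk', ha.symm⟩
  · have := (mem_sealedEdges.1 hi).lt
    omega

theorem three_le_card_of_length_eq {a b e : Fin 3} (hbe : b ≠ e)
    (hla : l a = 1) (hlb : l b = 2) (hfree : ∀ x, IsSegmentEnd l f b x → ¬ IsBoundary G X x)
    (hcross : ∀ x, IsSegmentEnd l f b x → ¬ HasCrossChord G l f b x)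
    {x : V} {c i : ℕ} (hx : IsCrossChord G l f a x e c) (hi0 : 0 < i) (hi : i + 1 < l e)
    (hib : IsBoundary G X (f e i)) : 3 ≤ (sealedEdges G X (l e) (f e)).card := by
  have hab : a ≠ b := by rintro rfl; omega
  have hthird : ∀ k, k ≠ b → 2 ≤ l k → k = e := fun k hk hlk => by
    rcases eq_or_eq_or_eq_of_fin_three hab hx.ne.symm hbe k with rfl | rfl | rfl
    · omega
    · exact absurd rfl hk
    · rfl
  have hfirst : 0 ∈ sealedEdges G X (l e) (f e) := by
    obtain ⟨k, hk, hlk, ha⟩ := h.exists_adj_left_of_length_eq_two hG hX hlb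
      (hfree _ (isSegmentEnd_left b)) (hcross _ (isSegmentEnd_left b))
    obtain rfl := hthird k hk hlk
    exact h.zero_mem_sealedEdges hk.symm hlk ha
  have hlast : l e - 2 ∈ sealedEdges G X (l e) (f e) := by
    obtain ⟨k, hk, hlk, ha⟩ := h.flip.exists_adj_left_of_length_eq_two hG hX hlb
      (by simpa using hfree _ (isSegmentEnd_right b))
      (fun hc => hcross _ (isSegmentEnd_right b) (by simpa using hasCrossChord_of_flip hc))
    obtain rfl := hthird k hk hlk
    exact h.last_mem_sealedEdges hk.symm hlk (by simpa using ha)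
  have hic : i ≠ c := by
    rintro rfl
    obtain ⟨j, hj, rfl⟩ := h.exists_eq_of_isSegmentEnd hx.isSegmentEnd
    exact h.not_isBoundary_of_chord hG hi0 hi hj (fun e' => absurd e'.symm hx.ne) hx.adj.symm hib
  obtain ⟨hc1, hc2⟩ := h.mem_sealedEdges_of_isCrossChord hG hx
  have hpos := hx.pos
  have hlt := hx.lt
  apply Finset.two_lt_card.2
  by_cases hc : c = 1
  · exact ⟨0, hfirst, c, hc2, l e - 2, hlast, by omega, by omega, by omega⟩
  · exact ⟨0, hfirst, c - 1, hc1, c, hc2, by omega, by omega, by omega⟩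

section NoBoundaryEnd

variable (hfree : ∀ k x, IsSegmentEnd l f k x → ¬ IsBoundary G X x)

include hfree

theorem four_le_sum_of_forall_not_hasCrossChord
    (hcross : ∀ k x, IsSegmentEnd l f k x → ¬ HasCrossChord G l f k x) {k : Fin 3}
    (hlk : 3 ≤ l k) : 4 ≤ ∑ k, (sealedEdges G X (l k) (f k)).card := by
  obtain ⟨a, b, hab, hak, hbk⟩ := exists_pair_ne_fin_three k
  have hone : ∀ k, 1 ≤ (sealedEdges G X (l k) (f k)).card := fun k =>
    h.one_le_card_of_not_hasCrossChord hG hX (isSegmentEnd_left k)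
      (hfree _ _ (isSegmentEnd_left k)) (hcross _ _ (isSegmentEnd_left k))
  have htwo := h.two_le_card_of_not_hasCrossChord hG hX hlk (hfree k) (hcross k)
  rw [sum_fin_three _ hab hak hbk]
  have ha := hone a
  have hb := hone b
  omega

theorem four_le_sum_of_unique_isCrossChord {a e : Fin 3} {x : V} {c : ℕ}
    (hx : IsCrossChord G l f a x e c)
    (huniq : ∀ k y, IsSegmentEnd l f k y → HasCrossChord G l f k y → y = x) {k₀ : Fin 3} {i : ℕ}
    (hi0 : 0 < i) (hi : i + 1 < l k₀) (hib : IsBoundary G X (f k₀ i)) :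
    4 ≤ ∑ k, (sealedEdges G X (l k) (f k)).card := by
  obtain ⟨b, hab, heb⟩ := exists_ne_ne_fin_three hx.ne.symm
  have htwo := h.two_le_card_of_isCrossChord hG hx
  have hcross : ∀ y, IsSegmentEnd l f b y → ¬ HasCrossChord G l f b y := fun y hy hc =>
    h.ne_of_isSegmentEnd hx.isSegmentEnd hy hab (huniq b y hy hc).symm
  have hone := h.one_le_card_of_not_hasCrossChord hG hX (isSegmentEnd_left b)
    (hfree _ _ (isSegmentEnd_left b)) (hcross _ (isSegmentEnd_left b))
  have hlb := h.two_le_length_of_not_hasCrossChord hG hX (hfree _ _ (isSegmentEnd_left b))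
    (hcross _ (isSegmentEnd_left b))
  rw [sum_fin_three _ hab hx.ne.symm heb.symm]
  by_cases hlb3 : 3 ≤ l b
  · have := h.two_le_card_of_not_hasCrossChord hG hX hlb3 (hfree b) hcross
    omega
  by_cases hla : 2 ≤ l a
  · have hne : f a 0 ≠ f a (l a - 1) := h.apply_ne (by omega) (by omega) (by omega)
    obtain ⟨y, hy, hyx⟩ : ∃ y, IsSegmentEnd l f a y ∧ y ≠ x := by
      by_cases h0 : f a 0 = x
      · exact ⟨_, isSegmentEnd_right a, fun h1 => hne (h0.trans h1.symm)⟩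
      · exact ⟨_, isSegmentEnd_left a, h0⟩
    have := h.one_le_card_of_not_hasCrossChord hG hX hy (hfree _ _ hy) (mt (huniq a y hy) hyx)
    omega
  · have hla1 := h.pos a
    obtain rfl : k₀ = e := by
      rcases eq_or_eq_or_eq_of_fin_three hab hx.ne.symm heb.symm k₀ with rfl | rfl | rfl
      · omega
      · omega
      · rfl
    have := h.three_le_card_of_length_eq hG hX heb.symm (by omega) (by omega) (hfree b) hcross hx
      hi0 hi hib
    omega

theorem four_le_sum_of_forall_not_isBoundary {o : V} (hoX : o ∈ X) (ho : IsBoundary G X o) :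
    4 ≤ ∑ k, (sealedEdges G X (l k) (f k)).card := by
  obtain ⟨k₀, i, hi0, hi, hib⟩ := h.exists_isBoundary_inner hG hfree hoX ho
  by_cases hnone : ∀ k x, IsSegmentEnd l f k x → ¬ HasCrossChord G l f k x
  · exact h.four_le_sum_of_forall_not_hasCrossChord hG hX hfree hnone (k := k₀) (by omega)
  push Not at hnone
  obtain ⟨a, x, -, e, c, hx⟩ := hnone
  by_cases hother : ∃ k y e' d, e ≠ e' ∧ IsCrossChord G l f k y e' d
  · obtain ⟨k, y, e', d, he, hy⟩ := hother
    exact h.four_le_sum_of_ne_of_isCrossChord hG he hx hy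
  have hto : ∀ k y, HasCrossChord G l f k y → ∃ d, IsCrossChord G l f k y e d := by
    rintro k y ⟨e', d, hy⟩
    obtain rfl : e = e' := by_contra fun he => hother ⟨k, y, e', d, he, hy⟩
    exact ⟨d, hy⟩
  have hle : ∀ k, (sealedEdges G X (l k) (f k)).card ≤
      ∑ k, (sealedEdges G X (l k) (f k)).card := fun k =>
    Finset.single_le_sum (f := fun k => (sealedEdges G X (l k) (f k)).card)
      (fun _ _ => Nat.zero_le _) (Finset.mem_univ k)
  by_cases hall : ∀ k ≠ e, ∀ y, IsSegmentEnd l f k y → HasCrossChord G l f k y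
  · refine (h.four_le_card_of_forall_isCrossChord hG hX (hfree _ _ (isSegmentEnd_left e)) ?_
      fun k hk y hy => hto k y (hall k hk y hy)).trans (hle e)
    intro hc
    obtain ⟨d, hd⟩ := hto _ _ hc
    exact hd.ne rfl
  by_cases huniq : ∀ k y, IsSegmentEnd l f k y → HasCrossChord G l f k y → y = x
  · exact h.four_le_sum_of_unique_isCrossChord hG hX hfree hx huniq hi0 hi hib
  push Not at hall huniq
  obtain ⟨k₁, hk₁, z, hz, hzc⟩ := hall
  obtain ⟨k₂, y, -, hyc, hyx⟩ := huniq
  obtain ⟨d, hy⟩ := hto _ _ hyc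
  have hsum := Finset.add_le_sum (f := fun k => (sealedEdges G X (l k) (f k)).card)
    (fun _ _ => Nat.zero_le _) (Finset.mem_univ e) (Finset.mem_univ k₁) hk₁.symm
  have hthree := h.three_le_card_of_isCrossChord hG hyx hy hx
  have hone := h.one_le_card_of_not_hasCrossChord hG hX hz (hfree _ _ hz) hzc
  omega

end NoBoundaryEnd

theorem isBoundary_or_one_le_card (k : Fin 3) :
    IsBoundary G X (f k 0) ∨ 1 ≤ (sealedEdges G X (l k) (f k)).card ∨
      ∃ e, 2 ≤ (sealedEdges G X (l e) (f e)).card := by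
  by_cases hb : IsBoundary G X (f k 0)
  · exact .inl hb
  by_cases hcross : HasCrossChord G l f k (f k 0)
  · obtain ⟨e, c, hc⟩ := hcross
    exact .inr (.inr ⟨e, h.two_le_card_of_isCrossChord hG hc⟩)
  · exact .inr (.inl (h.one_le_card_of_not_hasCrossChord hG hX (isSegmentEnd_left k) hb hcross))

theorem two_le_sum_add_card_filter [DecidableEq V] [DecidablePred (IsBoundary G X)] {a b : Fin 3}
    (hab : a ≠ b) : 2 ≤ ∑ k, (sealedEdges G X (l k) (f k)).card +
      (({f a 0, f b 0} : Finset V).filter (IsBoundary G X)).card := by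
  obtain ⟨e, hae, hbe⟩ := exists_ne_ne_fin_three hab
  rw [sum_fin_three _ hab hae hbe, Finset.card_filter,
    Finset.sum_pair (h.ne_of_isSegmentEnd (isSegmentEnd_left a) (isSegmentEnd_left b) hab)]
  have hmany : (∃ e, 2 ≤ (sealedEdges G X (l e) (f e)).card) →
      2 ≤ (sealedEdges G X (l a) (f a)).card + (sealedEdges G X (l b) (f b)).card +
        (sealedEdges G X (l e) (f e)).card := by
    rintro ⟨k, hk⟩
    rcases eq_or_eq_or_eq_of_fin_three hab hae hbe k with rfl | rfl | rfl <;> omega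
  rcases h.isBoundary_or_one_le_card hG hX a with ha | ha | ha <;>
    rcases h.isBoundary_or_one_le_card hG hX b with hb | hb | hb <;>
    grind

theorem exists_four_le_sum_add_requestWeight {o : V} (hoX : o ∈ X) (ho : IsBoundary G X o) :
    ∃ S : Finset V, (∀ w ∈ S, IsHamEnd G X w ∧ IsBoundary G X w) ∧
      4 ≤ ∑ k, (sealedEdges G X (l k) (f k)).card + requestWeight S.card := by
  classical
  by_cases hfree : ∀ k x, IsSegmentEnd l f k x → ¬ IsBoundary G X x
  · exact ⟨∅, by simp, by
      simpa [requestWeight] using h.four_le_sum_of_forall_not_isBoundary hG hX hfree hoX ho⟩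
  push Not at hfree
  obtain ⟨e, x, hx, hxb⟩ := hfree
  obtain ⟨a, b, hab, hae, hbe⟩ := exists_pair_ne_fin_three e
  have hxa := h.ne_of_isSegmentEnd hx (isSegmentEnd_left a) hae.symm
  have hxb' := h.ne_of_isSegmentEnd hx (isSegmentEnd_left b) hbe.symm
  set F := ({f a 0, f b 0} : Finset V).filter (IsBoundary G X) with hF
  have hFE : ∀ w ∈ F, IsHamEnd G X w ∧ IsBoundary G X w := by
    intro w hw
    obtain ⟨hw, hwb⟩ := Finset.mem_filter.1 hw
    rcases Finset.mem_insert.1 hw with rfl | hw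
    · exact ⟨h.isHamEnd_left a, hwb⟩
    · obtain rfl := Finset.mem_singleton.1 hw
      exact ⟨h.isHamEnd_left b, hwb⟩
  have htwo : 2 ≤ ∑ k, (sealedEdges G X (l k) (f k)).card + F.card :=
    h.two_le_sum_add_card_filter hG hX hab
  refine ⟨insert x F, ?_, ?_⟩
  · exact Finset.forall_mem_insert .. |>.2 ⟨⟨h.isHamEnd_of_isSegmentEnd hx, hxb⟩, hFE⟩
  · have hxF : x ∉ F := by simp [hF, hxa, hxb']
    rw [Finset.card_insert_of_notMem hxF, requestWeight, if_neg (Nat.succ_ne_zero _)]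
    omega

end IsTheta

end ThetaEnds

section Crossing

variable {V : Type*} {G : SimpleGraph V} {X : Finset V} {m i j : ℕ} {p : ℕ → V}

/-- The numbers of inner vertices of the three segments into which the branch vertices `p j` and
`p i` cut a path of `m` vertices together with the chords from `p 0` to `p i` and from `p (m - 1)`
to `p j`. -/
def crossingLength (m i j : ℕ) : Fin 3 → ℕ := ![j, i - j - 1, m - 1 - i]

/-- The index on the path of the `a`-th inner vertex of the `k`-th segment, counted from `p j`; see
`crossingLength`. -/
def crossingIndex (m j : ℕ) : Fin 3 → ℕ → ℕ :=
  ![fun a => j - 1 - a, fun a => j + 1 + a, fun a => m - 1 - a]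

/-- The index on the path of the edge between the vertices `a` and `a + 1` of the `k`-th segment. -/
def crossingEdge (m j : ℕ) (e : (_ : Fin 3) × ℕ) : ℕ :=
  min (crossingIndex m j e.1 e.2) (crossingIndex m j e.1 (e.2 + 1))

section Index

variable (hij : j + 2 ≤ i) (him : i + 1 < m)

include hij him

theorem crossingIndex_lt {k : Fin 3} {a : ℕ} (ha : a < crossingLength m i j k) :
    crossingIndex m j k a < m ∧ crossingIndex m j k a ≠ j ∧ crossingIndex m j k a ≠ i := by
  fin_cases k <;> simp [crossingLength, crossingIndex] at ha ⊢ <;> omega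

theorem crossingIndex_inj {k k' : Fin 3} {a a' : ℕ} (ha : a < crossingLength m i j k)
    (ha' : a' < crossingLength m i j k') (e : crossingIndex m j k a = crossingIndex m j k' a') :
    k = k' ∧ a = a' := by
  fin_cases k <;> fin_cases k' <;> simp [crossingLength, crossingIndex] at ha ha' e ⊢ <;> omega

theorem exists_crossingIndex_eq {n : ℕ} (hn : n < m) (hnj : n ≠ j) (hni : n ≠ i) :
    ∃ k, ∃ a < crossingLength m i j k, crossingIndex m j k a = n := by
  rcases lt_or_gt_of_ne hnj with hlt | hgt
  · exact ⟨0, j - 1 - n, by simp [crossingLength]; omega, by simp [crossingIndex]; omega⟩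
  rcases lt_or_gt_of_ne hni with hlt | hgt
  · exact ⟨1, n - j - 1, by simp [crossingLength]; omega, by simp [crossingIndex]; omega⟩
  · exact ⟨2, m - 1 - n, by simp [crossingLength]; omega, by simp [crossingIndex]; omega⟩

theorem crossingIndex_succ {k : Fin 3} {a : ℕ} (ha : a + 1 < crossingLength m i j k) :
    crossingIndex m j k (a + 1) = crossingIndex m j k a + 1 ∨
      crossingIndex m j k a = crossingIndex m j k (a + 1) + 1 := by
  fin_cases k <;> simp [crossingLength, crossingIndex] at ha ⊢ <;> omega

theorem crossingEdge_inj {e e' : (_ : Fin 3) × ℕ} (he : e.2 + 1 < crossingLength m i j e.1)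
    (he' : e'.2 + 1 < crossingLength m i j e'.1)
    (hee : crossingEdge m j e = crossingEdge m j e') : e = e' := by
  obtain ⟨k, a⟩ := e
  obtain ⟨k', a'⟩ := e'
  fin_cases k <;> fin_cases k' <;>
    simp [crossingLength, crossingIndex, crossingEdge] at he he' hee ⊢ <;> omega

theorem crossingEdge_ne {e : (_ : Fin 3) × ℕ} (he : e.2 + 1 < crossingLength m i j e.1) :
    crossingEdge m j e ∉ ({j - 1, j, i - 1, i} : Finset ℕ) := by
  obtain ⟨k, a⟩ := e
  fin_cases k <;> simp [crossingLength, crossingIndex, crossingEdge] at he ⊢ <;> omega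

end Index

theorem IsHamPath.isTheta (h : IsHamPath G X m p) (hj : 1 ≤ j) (hij : j + 2 ≤ i) (him : i + 1 < m)
    (h0 : G.Adj (p 0) (p i)) (h1 : G.Adj (p (m - 1)) (p j)) :
    IsTheta G X (p j) (p i) (crossingLength m i j) (fun k a => p (crossingIndex m j k a)) where
  pos k := by fin_cases k <;> simp [crossingLength] <;> omega
  inj k a k' a' ha ha' e :=
    crossingIndex_inj hij him ha ha' (h.inj (crossingIndex_lt hij him ha).1
      (crossingIndex_lt hij him ha').1 e)
  adj_succ k a ha := by
    have hlt := (crossingIndex_lt hij him (Nat.lt_of_succ_lt ha)).1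
    have hlt' := (crossingIndex_lt hij him ha).1
    rcases crossingIndex_succ hij him ha with e | e
    · exact h.adj_of_eq e hlt'
    · exact (h.adj_of_eq e hlt).symm
  adj_left k := by
    fin_cases k
    · exact (h.adj_of_eq (i := j - 1) (j := j) (by omega) (by omega)).symm
    · exact h.adj_of_eq (i := j) (j := j + 1) (by omega) (by omega)
    · exact h1.symm
  adj_right k := by
    fin_cases k
    · change G.Adj (p i) (p (j - 1 - (j - 1)))
      rw [Nat.sub_self]
      exact h0.symm
    · exact (h.adj_of_eq (i := j + 1 + (i - j - 1 - 1)) (j := i) (by omega) (by omega)).symm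
    · exact h.adj_of_eq (i := i) (j := m - 1 - (m - 1 - i - 1)) (by omega) (by omega)
  left_ne_right := h.ne (by omega) (by omega) (by omega)
  ne_left k a ha :=
    h.ne (crossingIndex_lt hij him ha).1 (by omega) (crossingIndex_lt hij him ha).2.1
  ne_right k a ha :=
    h.ne (crossingIndex_lt hij him ha).1 (by omega) (crossingIndex_lt hij him ha).2.2
  mem_iff v := by
    rw [h.mem_iff]
    constructor
    · rintro ⟨n, hn, rfl⟩
      by_cases hnj : n = j
      · exact .inl (by rw [hnj])
      by_cases hni : n = i
      · exact .inr (.inl (by rw [hni]))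
      obtain ⟨k, a, ha, rfl⟩ := exists_crossingIndex_eq hij him hn hnj hni
      exact .inr (.inr ⟨k, a, ha, rfl⟩)
    · rintro (rfl | rfl | ⟨k, a, ha, rfl⟩)
      · exact ⟨j, by omega, rfl⟩
      · exact ⟨i, by omega, rfl⟩
      · exact ⟨_, (crossingIndex_lt hij him ha).1, rfl⟩

section Crossing

variable (h : IsHamPath G X m p) (hj : 1 ≤ j) (hij : j + 2 ≤ i) (him : i + 1 < m)
  (h0 : G.Adj (p 0) (p i)) (h1 : G.Adj (p (m - 1)) (p j))

include hij him

theorem isSealedEdge_crossingEdge {k : Fin 3} {a : ℕ}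
    (ha : a ∈ sealedEdges G X (crossingLength m i j k) (fun a => p (crossingIndex m j k a))) :
    IsSealedEdge G X m p (crossingEdge m j ⟨k, a⟩) := by
  obtain ⟨hlt, hl, hr⟩ := mem_sealedEdges.1 ha
  have hlt' := (crossingIndex_lt hij him hlt).1
  have hlt'' := (crossingIndex_lt hij him (Nat.lt_of_succ_lt hlt)).1
  change IsSealedEdge G X m p (min (crossingIndex m j k a) (crossingIndex m j k (a + 1)))
  rcases crossingIndex_succ hij him hlt with e | e
  · rw [min_eq_left (by omega)]
    exact ⟨by omega, hl, by rwa [← e]⟩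
  · rw [min_eq_right (by omega)]
    exact ⟨by omega, hr, by rwa [← e]⟩

include h hj h0 h1

theorem isSealedEdge_of_mem_branch (hG : IsCubic G) {n : ℕ}
    (hn : n ∈ ({j - 1, j, i - 1, i} : Finset ℕ)) : IsSealedEdge G X m p n := by
  have ht := h.isTheta hj hij him h0 h1
  have hsealed_j : IsSealed G X (p j) := .inr (ht.not_isBoundary_left hG)
  have hsealed_i : IsSealed G X (p i) := .inr (ht.flip.not_isBoundary_left hG)
  have hsealed_left : ∀ k, IsSealed G X (p (crossingIndex m j k 0)) := fun k =>
    (ht.isHamEnd_left k).isSealed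
  have hsealed_right : ∀ k,
      IsSealed G X (p (crossingIndex m j k (crossingLength m i j k - 1))) := fun k =>
    (ht.isHamEnd_right k).isSealed
  have hright_one : j + 1 + (i - j - 1 - 1) = i - 1 := by omega
  have hright_two : m - 1 - (m - 1 - i - 1) = i + 1 := by omega
  simp only [Finset.mem_insert, Finset.mem_singleton] at hn
  rcases hn with rfl | rfl | rfl | rfl
  · exact ⟨by omega, hsealed_left 0, by rwa [Nat.sub_add_cancel hj]⟩
  · exact ⟨by omega, hsealed_j, hsealed_left 1⟩
  · exact ⟨by omega, hright_one ▸ hsealed_right 1, by rwa [Nat.sub_add_cancel (by omega)]⟩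
  · exact ⟨by omega, hsealed_i, hright_two ▸ hsealed_right 2⟩

theorem yields_of_crossing_chords (hG : IsCubic G) (hX : ¬ HomTraceable G X) {o : V} (hoX : o ∈ X)
    (ho : IsBoundary G X o) : Yields G X m p (IsHamEnd G X) 0 8 := by
  classical
  obtain ⟨S, hS, hcard⟩ :=
    (h.isTheta hj hij him h0 h1).exists_four_le_sum_add_requestWeight hG hX hoX ho
  set E := Finset.univ.sigma fun k =>
    sealedEdges G X (crossingLength m i j k) (fun a => p (crossingIndex m j k a))
  have hElt : ∀ e ∈ E, e.2 + 1 < crossingLength m i j e.1 := fun e he =>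
    (mem_sealedEdges.1 (Finset.mem_sigma.1 he).2).lt
  refine ⟨S, {j - 1, j, i - 1, i} ∪ E.image (crossingEdge m j), hS, ?_, ?_⟩
  · intro n hn
    refine ⟨Nat.zero_le n, ?_⟩
    rcases Finset.mem_union.1 hn with hn | hn
    · exact isSealedEdge_of_mem_branch h hj hij him h0 h1 hG hn
    · obtain ⟨e, he, rfl⟩ := Finset.mem_image.1 hn
      exact isSealedEdge_crossingEdge hij him (Finset.mem_sigma.1 he).2
  · have hdisj : Disjoint ({j - 1, j, i - 1, i} : Finset ℕ) (E.image (crossingEdge m j)) := by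
      rw [Finset.disjoint_right]
      intro n hn
      obtain ⟨e, he, rfl⟩ := Finset.mem_image.1 hn
      exact crossingEdge_ne hij him (hElt e he)
    have hfour : 4 ≤ ({j - 1, j, i - 1, i} : Finset ℕ).card :=
      four_le_card_of_mem (a := j - 1) (b := j) (c := i - 1) (d := i) (by simp) (by simp) (by simp)
        (by simp) (by omega) (by omega) (by omega)
    rw [Finset.card_union_of_disjoint hdisj, Finset.card_image_of_injOn, Finset.card_sigma]
    · omega
    · exact fun e he e' he' hee => crossingEdge_inj hij him (hElt e he) (hElt e' he') hee

end Crossing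

end Crossing

section Settled

variable {V : Type*} {G : SimpleGraph V} {X : Finset V} {m j j' : ℕ} {p : ℕ → V}

/-- The last vertex of the path `p` has no neighbour on the path other than its predecessor. -/
def IsChordlessEnd (G : SimpleGraph V) (m : ℕ) (p : ℕ → V) : Prop :=
  ∀ i < m, G.Adj (p (m - 1)) (p i) → i = m - 2

/-- The stretch of the path `p` from index `j` on provides half of the value that is claimed from
`X`: it consists of the last edge only and ends without a chord, or it yields four units. In the
first case two requests come from the same vertex `p (m - 1)`. -/
def IsTail (G : SimpleGraph V) (X : Finset V) (m : ℕ) (p : ℕ → V) (j : ℕ) : Prop :=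
  (j = m - 2 ∧ IsChordlessEnd G m p) ∨ Yields G X m p (IsReroutedEnd G X m p j) j 4

theorem exists_minimal_chord {P : (ℕ → V) → Prop} (h : ∃ q, P q ∧ ¬ IsChordlessEnd G m q) :
    ∃ j q, P q ∧ j + 2 < m ∧ G.Adj (q (m - 1)) (q j) ∧
      ∀ r, P r → ∀ i < j, ¬ G.Adj (r (m - 1)) (r i) := by
  classical
  have hex : ∃ j q, P q ∧ j + 2 < m ∧ G.Adj (q (m - 1)) (q j) := by
    obtain ⟨q, hq, hc⟩ := h
    simp only [IsChordlessEnd, not_forall] at hc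
    obtain ⟨i, him, hadj, hne⟩ := hc
    have hlast : i ≠ m - 1 := by
      rintro rfl
      exact G.irrefl hadj
    exact ⟨i, q, hq, by omega, hadj⟩
  obtain ⟨q, hq, hj, hadj⟩ := Nat.find_spec hex
  exact ⟨_, q, hq, hj, hadj, fun r hr i hi ha => Nat.find_min hex hi ⟨r, hr, by omega, ha⟩⟩

theorem IsHamPath.splice {q s : ℕ → V} (hs : IsHamPath G X m s) (hq : IsHamPath G X m q)
    (hj : s j = q j) (hne : ∀ a ≤ j, ∀ b < m, j < b → s a ≠ q b) :
    IsHamPath G X m fun i => if i ≤ j then s i else q i := by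
  classical
  have hinj : ∀ ⦃a b⦄, a < m → b < m →
      (if a ≤ j then s a else q a) = (if b ≤ j then s b else q b) → a = b := by
    intro a b ha hb e
    split_ifs at e with haj hbj hbj
    · exact hs.inj ha hb e
    · exact absurd e (hne a haj b hb (by omega))
    · exact absurd e.symm (hne b hbj a ha (by omega))
    · exact hq.inj ha hb e
  have himage : (Finset.range m).image (fun i => if i ≤ j then s i else q i) = X := by
    refine Finset.eq_of_subset_of_card_le (Finset.image_subset_iff.2 fun i hi => ?_) ?_
    · have hi := Finset.mem_range.1 hi
      split_ifs
      · exact hs.mem hi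
      · exact hq.mem hi
    · rw [Finset.card_image_of_injOn, Finset.card_range, hs.card_eq]
      exact fun a ha b hb => hinj (Finset.mem_range.1 ha) (Finset.mem_range.1 hb)
  refine ⟨hs.pos, hinj, fun i hi => ?_, fun v => by simp [← himage]⟩
  split_ifs with h₁ h₂ h₂
  · exact hs.adj_succ hi
  · obtain rfl : i = j := by omega
    rw [hj]
    exact hq.adj_succ hi
  · omega
  · exact hq.adj_succ hi

theorem IsRerouting.apply_of_reverse {q : ℕ → V}
    (hq : IsRerouting G X m (fun i => p (m - 1 - i)) j q) {i : ℕ} (hi : i < m)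
    (hij : m - 1 - i ≤ j) : q (m - 1 - i) = p i := by
  rw [hq.eq_of_le _ hij]
  congr 1
  omega

theorem IsHamPath.hasHamPath_of_isReroutedEnd (h : IsHamPath G X m p) (hj : j + 1 < m)
    (hjj : m - 1 ≤ j + j') {u w : V} (hw : IsReroutedEnd G X m p j w)
    (hu : IsReroutedEnd G X m (fun i => p (m - 1 - i)) j' u) : HasHamPath G X u w := by
  obtain ⟨q, hq, rfl⟩ := hw
  obtain ⟨r, hr, rfl⟩ := hu
  have hs := hr.isHamPath.reverse
  have hagree : ∀ c, j ≤ c → c < m → r (m - 1 - c) = p c := fun c hjc hc =>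
    hr.apply_of_reverse hc (by omega)
  have hne : ∀ a ≤ j, ∀ b < m, j < b → r (m - 1 - a) ≠ q b := by
    intro a ha b hb hjb e
    obtain ⟨c, hc, ec⟩ := (h.mem_iff (q b)).1 (hq.isHamPath.mem hb)
    rcases le_or_gt c j with hcj | hcj
    · have := hq.isHamPath.inj hc hb ((hq.eq_of_le c hcj).trans ec)
      omega
    · have := hs.inj (by omega) hc (e.trans (ec.symm.trans (hagree c hcj.le hc).symm))
      omega
  have hsplice := (hs.splice hq.isHamPath
    ((hagree j le_rfl (by omega)).trans (hq.eq_of_le j le_rfl).symm) hne).hasHamPath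
  simpa [show ¬ m - 1 ≤ j by omega] using hsplice

theorem IsHamPath.three_le (h : IsHamPath G X m p) (hX : ¬ HomTraceable G X) : 3 ≤ m := by
  by_contra hm
  refine hX fun v hv => ?_
  obtain ⟨i, hi, rfl⟩ := (h.mem_iff v).1 hv
  obtain rfl | rfl : i = 0 ∨ i = m - 1 := by omega
  · exact h.isHamEnd_zero
  · exact h.isHamEnd_last

theorem IsHamPath.not_adj_zero (h : IsHamPath G X m p) (hX : ¬ HomTraceable G X) :
    ¬ G.Adj (p (m - 1)) (p 0) := fun ha => hX (h.homTraceable_of_adj ha)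

theorem IsHamPath.crossing_lt (h : IsHamPath G X m p) (hX : ¬ HomTraceable G X) {i : ℕ}
    (hj : j + 1 < m) (hji : j < i) (hi : i < m) (h0 : G.Adj (p 0) (p i))
    (h1 : G.Adj (p (m - 1)) (p j)) : j + 2 ≤ i ∧ i + 1 < m := by
  have hlast : i ≠ m - 1 := by
    rintro rfl
    exact h.not_adj_zero hX h0.symm
  have hsucc : i ≠ j + 1 := by
    rintro rfl
    refine (h.rotate hj h1).not_adj_zero hX ?_
    rw [posaRotate_of_le (Nat.zero_le j),
      posaRotate_of_add_eq (k := j + 1) (by omega) (by omega)]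
    exact h0.symm
  omega

theorem isLobe_of_minimal_chord {q : ℕ → V} (hX : ¬ HomTraceable G X)
    (hq : IsHamPath G X m q) (hj : j + 2 < m) (ha : G.Adj (q (m - 1)) (q j))
    (hmin : ∀ r, IsRerouting G X m q j r → ∀ i < j, ¬ G.Adj (r (m - 1)) (r i)) :
    IsLobe G X m q j where
  isHamPath := hq
  pos := Nat.pos_of_ne_zero fun h0 => hq.not_adj_zero hX (h0 ▸ ha)
  lt := hj
  adj := ha
  not_adj r hr i hi hadj := hmin r hr i hi (by rwa [hr.eq_of_le i hi.le])

theorem IsRerouting.mono {q : ℕ → V} {i : ℕ} (h : IsRerouting G X m p j q) (hij : i ≤ j) :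
    IsRerouting G X m p i q :=
  ⟨h.isHamPath, fun c hc => h.eq_of_le c (hc.trans hij)⟩

theorem isTail_reverse_reverse_of_minimal_chord {q : ℕ → V} (hG : IsCubic G)
    (hX : ¬ HomTraceable G X) (hq : IsHamPath G X m q) (hj : j + 2 < m)
    (ha : G.Adj (q (m - 1)) (q j))
    (hmin : ∀ r, IsRerouting G X m q j r → ∀ i < j, ¬ G.Adj (r (m - 1)) (r i)) :
    IsTail G X m (fun i => q (m - 1 - (m - 1 - i))) j := by
  have hqq : ∀ i < m, q (m - 1 - (m - 1 - i)) = q i := fun i hi => by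
    congr 1
    omega
  refine .inr (IsLobe.yields (isLobe_of_minimal_chord hX hq.reverse.reverse hj ?_ ?_) hG)
  · rwa [hqq _ (by omega), hqq _ (by omega)]
  · exact fun r hr => hmin r ⟨hr.isHamPath, fun i hi => (hr.eq_of_le i hi).trans (hqq i (by omega))⟩

/-- `X` provides the value eight along the path `p`: in one piece, or by tails at both ends of `p`
without a common edge. -/
def IsSettled (G : SimpleGraph V) (X : Finset V) (m : ℕ) (p : ℕ → V) : Prop :=
  Yields G X m p (IsHamEnd G X) 0 8 ∨ ∃ j j', j + 1 < m ∧ m - 1 ≤ j + j' ∧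
    IsTail G X m p j ∧ IsTail G X m (fun i => p (m - 1 - i)) j'

theorem isSettled_reverse_of_minimal_chord (h : IsHamPath G X m p) (hG : IsCubic G)
    (hX : ¬ HomTraceable G X) {o : V} (hoX : o ∈ X) (ho : IsBoundary G X o) (hj : j + 2 < m)
    (ha : G.Adj (p (m - 1)) (p j))
    (hmin : ∀ r, IsHamPath G X m r → ∀ i < j, ¬ G.Adj (r (m - 1)) (r i))
    {q : ℕ → V} {i : ℕ} (hq : IsRerouting G X m (fun i => p (m - 1 - i)) (m - 1 - j) q)
    (hi : i + 2 < m) (hqa : G.Adj (q (m - 1)) (q i))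
    (hqmin : ∀ r, IsRerouting G X m (fun i => p (m - 1 - i)) (m - 1 - j) r →
      ∀ c < i, ¬ G.Adj (r (m - 1)) (r c)) : IsSettled G X m fun i => q (m - 1 - i) := by
  have hrev := hq.isHamPath.reverse
  have hjpos : 0 < j := Nat.pos_of_ne_zero fun hj0 => h.not_adj_zero hX (hj0 ▸ ha)
  have hlast : G.Adj (q (m - 1 - (m - 1))) (q (m - 1 - j)) := by
    rwa [hq.apply_of_reverse (by omega) (by omega), hq.apply_of_reverse (by omega) (by omega)]
  have hzero : G.Adj (q (m - 1 - 0)) (q (m - 1 - (m - 1 - i))) := by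
    rwa [Nat.sub_zero, Nat.sub_sub_self (by omega)]
  rcases lt_trichotomy i (m - 1 - j) with hlt | rfl | hgt
  · obtain ⟨hji, him⟩ := hrev.crossing_lt hX (i := m - 1 - i) (j := j) (by omega) (by omega)
      (by omega) hzero hlast
    exact .inl (yields_of_crossing_chords hrev hjpos hji him hzero hlast hG hX hoX ho)
  · rw [Nat.sub_sub_self (by omega : j ≤ m - 1)] at hzero
    have := hrev.eq_of_chord hG hjpos (by omega) (by omega) (by omega) (by omega) hlast.symm
      (by omega) hzero.symm
    omega
  · refine .inr ⟨j, i, by omega, by omega, ?_, ?_⟩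
    · exact .inr (IsLobe.yields (isLobe_of_minimal_chord hX hrev hj hlast
        fun r hr => hmin r hr.isHamPath) hG)
    · exact isTail_reverse_reverse_of_minimal_chord hG hX hq.isHamPath hi hqa
        fun r hr => hqmin r ((hr.mono hgt.le).trans hq)

theorem exists_isSettled {p₀ : ℕ → V} (h₀ : IsHamPath G X m p₀) (hG : IsCubic G)
    (hX : ¬ HomTraceable G X) {o : V} (hoX : o ∈ X) (ho : IsBoundary G X o) :
    ∃ p, IsHamPath G X m p ∧ IsSettled G X m p := by
  have hm := h₀.three_le hX
  by_cases hchordless : ∀ q, IsHamPath G X m q → IsChordlessEnd G m q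
  · exact ⟨p₀, h₀, .inr ⟨m - 2, m - 2, by omega, by omega,
      .inl ⟨rfl, hchordless _ h₀⟩, .inl ⟨rfl, hchordless _ h₀.reverse⟩⟩⟩
  push Not at hchordless
  obtain ⟨j, p, hp, hj, ha, hmin⟩ := exists_minimal_chord hchordless
  by_cases hrev : ∀ q, IsRerouting G X m (fun i => p (m - 1 - i)) (m - 1 - j) q →
      IsChordlessEnd G m q
  · have hlobe := isLobe_of_minimal_chord hX hp hj ha fun r hr => hmin r hr.isHamPath
    have hjpos := hlobe.pos
    exact ⟨p, hp, .inr ⟨j, m - 2, by omega, by omega, .inr (hlobe.yields hG),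
      .inl ⟨rfl, hrev _ (hp.reverse.isRerouting _)⟩⟩⟩
  push Not at hrev
  obtain ⟨i, q, hq, hi, hqa, hqmin⟩ := exists_minimal_chord hrev
  exact ⟨_, hq.isHamPath.reverse,
    isSettled_reverse_of_minimal_chord hp hG hX hoX ho hj ha hmin hq hi hqa hqmin⟩

end Settled

section Partition

variable {V : Type*} {G : SimpleGraph V} {X Y Z U W : Finset V} {C : Finset (Finset V)} {m : ℕ}
  {p : ℕ → V}

namespace IsHamPath

theorem eq_or_eq_or_eq_of_not_isHamEnd (h : IsHamPath G X m p) (hG : IsCubic G) {i : ℕ}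
    (hi : i < m) (hE : ¬ IsHamEnd G X (p i)) {u b : V} (huX : u ∉ X) (hu : G.Adj (p i) u)
    (hb : G.Adj (p i) b) :
    0 < i ∧ i + 1 < m ∧ (b = p (i - 1) ∨ b = p (i + 1) ∨ b = u) := by
  have h0 : i ≠ 0 := by
    rintro rfl
    exact hE h.isHamEnd_zero
  have h1 : i ≠ m - 1 := by
    rintro rfl
    exact hE h.isHamEnd_last
  have hne : ∀ k < m, p k ≠ u := fun k hk e => huX (e ▸ h.mem hk)
  exact ⟨by omega, by omega, hG.eq_or_eq_or_eq_of_adj (h.adj_pred (by omega) hi)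
    (h.adj_succ (by omega)) hu (h.ne (by omega) (by omega) (by omega)) (hne _ (by omega))
    (hne _ (by omega)) hb⟩

theorem exists_consecutive (h : IsHamPath G X m p) (hG : IsCubic G) {a b : V} (ha : a ∈ X)
    (hb : b ∈ X) (hab : G.Adj a b) (hE : ¬ IsHamEnd G X a) (hout : IsBoundary G X a) :
    ∃ i, i + 1 < m ∧ (p i = a ∧ p (i + 1) = b ∨ p i = b ∧ p (i + 1) = a) := by
  obtain ⟨u, hu, huX⟩ := hout
  obtain ⟨i, hi, rfl⟩ := (h.mem_iff a).1 ha
  obtain ⟨h0, h1, e | e | e⟩ := h.eq_or_eq_or_eq_of_not_isHamEnd hG hi hE huX hu hab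
  · exact ⟨i - 1, by omega, .inr ⟨e.symm, by congr 1; omega⟩⟩
  · exact ⟨i, h1, .inl ⟨rfl, e.symm⟩⟩
  · exact absurd (e ▸ hb) huX

theorem insert [DecidableEq V] (h : IsHamPath G X m p) {i : ℕ} (hi : i + 1 < m) {u : V}
    (hu : u ∉ X) (h1 : G.Adj u (p i)) (h2 : G.Adj u (p (i + 1))) :
    HasHamPath G (X ∪ {u}) (p 0) (p (m - 1)) := by
  obtain ⟨A, B, rfl, hAB, hA, hB, -, -⟩ := h.exists_split hi
  rw [Finset.mem_union, not_or] at hu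
  have hAu := hA.append (hasHamPath_singleton G u) (by simpa using hu.1) h1.symm
  rw [Finset.union_right_comm]
  exact hAu.append hB (by simp [hAB, hu.2]) h2

end IsHamPath

theorem Traceable.eq_of_adj_of_notMem (hX : Traceable G X) (hG : IsCubic G) {a u w : V}
    (ha : a ∈ X) (hE : ¬ IsHamEnd G X a) (hu : G.Adj a u) (hw : G.Adj a w) (huX : u ∉ X)
    (hwX : w ∉ X) : u = w := by
  obtain ⟨_, _, m, p, h, -, -⟩ := hX
  obtain ⟨i, hi, rfl⟩ := (h.mem_iff a).1 ha
  obtain ⟨h0, h1, e | e | e⟩ := h.eq_or_eq_or_eq_of_not_isHamEnd hG hi hE hwX hw hu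
  · exact absurd (e ▸ h.mem (by omega)) huX
  · exact absurd (e ▸ h.mem h1) huX
  · exact e

theorem Traceable.exists_isHamPath_succ (hX : Traceable G X) (hG : IsCubic G) {a b : V}
    (ha : a ∈ X) (hb : b ∈ X) (hab : G.Adj a b) (hE : ¬ IsHamEnd G X a)
    (hout : IsBoundary G X a) :
    ∃ m p i, IsHamPath G X m p ∧ i + 1 < m ∧ p i = a ∧ p (i + 1) = b := by
  obtain ⟨_, _, m, p, h, -, -⟩ := hX
  obtain ⟨i, hi, ⟨h1, h2⟩ | ⟨h1, h2⟩⟩ := h.exists_consecutive hG ha hb hab hE hout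
  · exact ⟨m, p, i, h, hi, h1, h2⟩
  · refine ⟨m, _, m - 2 - i, h.reverse, by omega, ?_, ?_⟩
    · rw [← h2]
      congr 1
      omega
    · rw [← h1]
      congr 1
      omega

/-- A partition of the vertex set into traceable parts. -/
structure IsPathPartition (G : SimpleGraph V) (C : Finset (Finset V)) : Prop where
  traceable : ∀ ⦃X⦄, X ∈ C → Traceable G X
  pairwiseDisjoint : (C : Set (Finset V)).PairwiseDisjoint id
  exists_mem : ∀ v, ∃ X ∈ C, v ∈ X

/-- A path partition with as few parts as possible. -/
def IsMinPartition (G : SimpleGraph V) (C : Finset (Finset V)) : Prop :=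
  MinimalFor (IsPathPartition G) Finset.card C

namespace IsPathPartition

theorem disjoint (h : IsPathPartition G C) (hX : X ∈ C) (hY : Y ∈ C) (hXY : X ≠ Y) :
    Disjoint X Y :=
  h.pairwiseDisjoint hX hY hXY

theorem eq_of_mem (h : IsPathPartition G C) (hX : X ∈ C) (hY : Y ∈ C) {v : V} (hvX : v ∈ X)
    (hvY : v ∈ Y) : X = Y := by
  by_contra hXY
  exact Finset.disjoint_left.1 (h.disjoint hX hY hXY) hvX hvY

theorem replace [DecidableEq V] {A B : Finset (Finset V)} (h : IsPathPartition G C) (hA : A ⊆ C)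
    (hB : ∀ X ∈ B, Traceable G X) (hdisj : (B : Set (Finset V)).PairwiseDisjoint id)
    (hAB : A.biUnion id = B.biUnion id) : IsPathPartition G ((C \ A) ∪ B) where
  traceable X hX := by
    rcases Finset.mem_union.1 hX with hX | hX
    · exact h.traceable (Finset.mem_sdiff.1 hX).1
    · exact hB X hX
  pairwiseDisjoint := by
    rw [Finset.coe_union, Set.pairwiseDisjoint_union]
    refine ⟨h.pairwiseDisjoint.subset (by simp), hdisj, fun X hX Y hY _ => ?_⟩
    rw [Finset.mem_coe, Finset.mem_sdiff] at hX
    refine Finset.disjoint_left.2 fun v hvX hvY => ?_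
    have hv : v ∈ A.biUnion id := hAB ▸ Finset.mem_biUnion.2 ⟨Y, hY, hvY⟩
    obtain ⟨Z, hZ, hvZ⟩ := Finset.mem_biUnion.1 hv
    exact hX.2 (h.eq_of_mem hX.1 (hA hZ) hvX hvZ ▸ hZ)
  exists_mem v := by
    obtain ⟨X, hX, hvX⟩ := h.exists_mem v
    by_cases hXA : X ∈ A
    · have hv : v ∈ B.biUnion id := hAB ▸ Finset.mem_biUnion.2 ⟨X, hXA, hvX⟩
      obtain ⟨Y, hY, hvY⟩ := Finset.mem_biUnion.1 hv
      exact ⟨Y, Finset.mem_union_right _ hY, hvY⟩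
    · exact ⟨X, Finset.mem_union_left _ (Finset.mem_sdiff.2 ⟨hX, hXA⟩), hvX⟩

end IsPathPartition

theorem isPathPartition_singletons [Fintype V] [DecidableEq V] (G : SimpleGraph V) :
    IsPathPartition G (Finset.univ.image fun v => {v}) where
  traceable X hX := by
    obtain ⟨v, -, rfl⟩ := Finset.mem_image.1 hX
    exact (hasHamPath_singleton G v).traceable
  pairwiseDisjoint X hX Y hY hXY := by
    obtain ⟨v, -, rfl⟩ := Finset.mem_image.1 hX
    obtain ⟨w, -, rfl⟩ := Finset.mem_image.1 hY
    exact Finset.disjoint_singleton.2 fun e => hXY (e ▸ rfl)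
  exists_mem v := ⟨{v}, by simp, by simp⟩

namespace IsMinPartition

theorem isPathPartition (h : IsMinPartition G C) : IsPathPartition G C := h.prop

section

variable [DecidableEq V]

theorem card_le_of_replace {A B : Finset (Finset V)} (h : IsMinPartition G C) (hA : A ⊆ C)
    (hB : ∀ X ∈ B, Traceable G X) (hdisj : (B : Set (Finset V)).PairwiseDisjoint id)
    (hAB : A.biUnion id = B.biUnion id) : A.card ≤ B.card := by
  have hmin := MinimalFor.le h (h.isPathPartition.replace hA hB hdisj hAB)
  have hunion := Finset.card_union_le (C \ A) B
  have hsdiff := Finset.card_sdiff_of_subset hA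
  have hle := Finset.card_le_card hA
  omega

theorem not_traceable_union (h : IsMinPartition G C) (hX : X ∈ C) (hY : Y ∈ C) (hXY : X ≠ Y) :
    ¬ Traceable G (X ∪ Y) := by
  intro ht
  have hle := h.card_le_of_replace (A := {X, Y}) (B := {X ∪ Y})
    (by simp [Finset.insert_subset_iff, hX, hY]) (by simpa using ht) (by simp) (by simp)
  rw [Finset.card_pair hXY, Finset.card_singleton] at hle
  omega

theorem not_traceable_of_union_eq (h : IsMinPartition G C) (hX : X ∈ C) (hY : Y ∈ C) (hZ : Z ∈ C)
    (hXY : X ≠ Y) (hXZ : X ≠ Z) (hYZ : Y ≠ Z) (hU : Traceable G U) (hUW : Disjoint U W)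
    (hunion : U ∪ W = X ∪ Y ∪ Z) : ¬ Traceable G W := by
  intro hW
  have hle := h.card_le_of_replace (A := {X, Y, Z}) (B := {U, W})
    (by simp [Finset.insert_subset_iff, hX, hY, hZ]) (by simp [hU, hW])
    (by simpa [Set.pairwiseDisjoint_insert] using fun _ => hUW) (by simp [hunion])
  rw [Finset.card_eq_three.2 ⟨X, Y, Z, hXY, hXZ, hYZ, rfl⟩] at hle
  have := Finset.card_le_two (a := U) (b := W)
  omega

theorem replace_pair (h : IsMinPartition G C) (hX : X ∈ C) (hY : Y ∈ C) (hXY : X ≠ Y)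
    (hU : Traceable G U) (hW : Traceable G W) (hUW : Disjoint U W) (hunion : U ∪ W = X ∪ Y) :
    IsMinPartition G ((C \ {X, Y}) ∪ {U, W}) := by
  have hsub : ({X, Y} : Finset (Finset V)) ⊆ C := by simp [Finset.insert_subset_iff, hX, hY]
  refine ⟨h.isPathPartition.replace hsub (by simp [hU, hW])
    (by simpa [Set.pairwiseDisjoint_insert] using fun _ => hUW) (by simp [hunion]),
    fun C' hC' _ => le_trans ?_ (MinimalFor.le h hC')⟩
  have h2 := Finset.card_union_le (C \ {X, Y}) {U, W}
  have h3 := Finset.card_sdiff_of_subset hsub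
  have h4 := Finset.card_le_card hsub
  have h5 := Finset.card_le_two (a := U) (b := W)
  rw [Finset.card_pair hXY] at h3 h4
  omega

end

theorem not_adj_of_isHamEnd (h : IsMinPartition G C) (hX : X ∈ C) (hY : Y ∈ C) (hXY : X ≠ Y)
    {u w : V} (hu : IsHamEnd G X u) (hw : IsHamEnd G Y w) : ¬ G.Adj u w := by
  classical
  intro huw
  obtain ⟨a, hu⟩ := hu
  obtain ⟨b, hw⟩ := hw
  exact h.not_traceable_union hX hY hXY
    (hu.append hw.symm (h.isPathPartition.disjoint hX hY hXY) huw).traceable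

theorem eq_of_adj_succ (h : IsMinPartition G C) (hX : X ∈ C) (hY : Y ∈ C) (hZ : Z ∈ C)
    (hXY : X ≠ Y) (hXZ : X ≠ Z) (hp : IsHamPath G X m p) {i : ℕ} (hi : i + 1 < m) {u w : V}
    (hu : IsHamEnd G Y u) (hw : IsHamEnd G Z w) (hiu : G.Adj (p i) u)
    (hiw : G.Adj (p (i + 1)) w) : Y = Z := by
  classical
  by_contra hYZ
  obtain ⟨a, hu⟩ := hu
  obtain ⟨b, hw⟩ := hw
  obtain ⟨A, B, rfl, hAB, hA, hB, -, -⟩ := hp.exists_split hi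
  have dY := h.isPathPartition.disjoint hX hY hXY
  have dZ := h.isPathPartition.disjoint hX hZ hXZ
  have dYZ := h.isPathPartition.disjoint hY hZ hYZ
  rw [Finset.disjoint_union_left] at dY dZ
  refine h.not_traceable_of_union_eq hX hY hZ hXY hXZ hYZ (hA.append hu.symm dY.1 hiu).traceable
    ?_ ?_ (hw.append hB dZ.2.symm hiw.symm).traceable
  · simp [Finset.disjoint_union_left, Finset.disjoint_union_right, dZ.1, dYZ, hAB, dY.2.symm]
  · ext v
    simp only [Finset.mem_union]
    tauto

theorem not_hasHamPath_of_adj_succ (h : IsMinPartition G C) (hX : X ∈ C) (hY : Y ∈ C)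
    (hXY : X ≠ Y) (hp : IsHamPath G X m p) {i : ℕ} (hi : i + 1 < m) {u w : V}
    (hiu : G.Adj (p i) u) (hiw : G.Adj (p (i + 1)) w) : ¬ HasHamPath G Y u w := by
  classical
  intro hu
  obtain ⟨A, B, rfl, hAB, hA, hB, -, -⟩ := hp.exists_split hi
  have dY := h.isPathPartition.disjoint hX hY hXY
  rw [Finset.disjoint_union_left] at dY
  have hAYB := (hA.append hu dY.1 hiu).append hB
    (by simp [Finset.disjoint_union_left, hAB, dY.2.symm]) hiw.symm
  rw [Finset.union_right_comm] at hAYB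
  exact h.not_traceable_union hX hY hXY hAYB.traceable

/-- The last vertex `u` of a Hamiltonian path of `X` could be moved into the path of `P`, after
which the rest of `X` would be joined to `Z`. -/
theorem not_adj_of_adj_consecutive [DecidableEq V] (h : IsMinPartition G C) (hG : IsCubic G)
    {P : Finset V} {u a b v z y : V} (hX : X ∪ {u} ∈ C) (hP : P ∈ C) (hZ : Z ∈ C)
    (hXP : X ∪ {u} ≠ P) (hXZ : X ∪ {u} ≠ Z) (hu : u ∉ X) (hv : HasHamPath G X z v) (haP : a ∈ P)
    (hbP : b ∈ P) (hua : G.Adj u a) (hub : G.Adj u b) (hab : G.Adj a b) (haE : ¬ IsHamEnd G P a)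
    (hy : IsHamEnd G Z y) : ¬ G.Adj v y := by
  intro hvy
  have dXP := h.isPathPartition.disjoint hX hP hXP
  have dXZ := h.isPathPartition.disjoint hX hZ hXZ
  rw [Finset.disjoint_union_left, Finset.disjoint_singleton_left] at dXP dXZ
  have hinsert : ∀ l r, IsHamPath G P l r → HasHamPath G (P ∪ {u}) (r 0) (r (l - 1)) := by
    intro l r hr
    obtain ⟨i, hi, ⟨rfl, rfl⟩ | ⟨rfl, rfl⟩⟩ :=
      hr.exists_consecutive hG haP hbP hab haE ⟨u, hua.symm, dXP.2⟩
    · exact hr.insert hi dXP.2 hua hub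
    · exact hr.insert hi dXP.2 hub hua
  by_cases hPZ : P = Z
  · subst hPZ
    obtain ⟨s, l, r, hr, rfl, rfl⟩ := hy
    have hXPu := hv.append (hinsert l r hr).symm
      (by simp [dXP.1, hu]) hvy
    refine h.not_traceable_union hX hP hXP ?_
    convert hXPu.traceable using 1
    ext v
    simp only [Finset.mem_union]
    tauto
  · obtain ⟨s, hy⟩ := hy
    obtain ⟨_, _, l, r, hr, -, -⟩ := h.isPathPartition.traceable hP
    have dPZ := h.isPathPartition.disjoint hP hZ hPZ
    refine h.not_traceable_of_union_eq hX hP hZ hXP hXZ hPZ (hinsert l r hr).traceable ?_ ?_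
      (hv.append hy.symm dXZ.1 hvy).traceable
    · simp [Finset.disjoint_union_right, dXP.1.symm, hu, dPZ, dXZ.2]
    · ext v
      simp only [Finset.mem_union]
      tauto

end IsMinPartition

open Classical in
/-- The number of homogeneously traceable parts of `C`. -/
noncomputable def numHomTraceable (G : SimpleGraph V) (C : Finset (Finset V)) : ℕ :=
  (C.filter (HomTraceable G)).card

/-- A smallest path partition which, among those, has as few homogeneously traceable parts as
possible. -/
def IsOptimal (G : SimpleGraph V) (C : Finset (Finset V)) : Prop :=
  MinimalFor (IsMinPartition G) (numHomTraceable G) C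

theorem exists_isOptimal [Finite V] (G : SimpleGraph V) : ∃ C, IsOptimal G C := by
  classical
  have := Fintype.ofFinite V
  exact exists_minimalFor_of_wellFoundedLT _ _
    (exists_minimalFor_of_wellFoundedLT _ _ ⟨_, isPathPartition_singletons G⟩)

namespace IsOptimal

theorem isMinPartition (h : IsOptimal G C) : IsMinPartition G C := h.prop

theorem isPathPartition (h : IsOptimal G C) : IsPathPartition G C :=
  h.isMinPartition.isPathPartition

theorem replace_pair [DecidableEq V] (h : IsOptimal G C) (hX : X ∈ C) (hY : Y ∈ C) (hXY : X ≠ Y)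
    (hU : Traceable G U) (hW : Traceable G W) (hUW : Disjoint U W) (hunion : U ∪ W = X ∪ Y)
    (hXhom : HomTraceable G X) (hUhom : ¬ HomTraceable G U) :
    IsOptimal G ((C \ {X, Y}) ∪ {U, W}) ∧ HomTraceable G W := by
  classical
  set C' := (C \ {X, Y}) ∪ {U, W} with hC'
  have hmin : IsMinPartition G C' := h.isMinPartition.replace_pair hX hY hXY hU hW hUW hunion
  have hmemX : X ∈ C.filter (HomTraceable G) := Finset.mem_filter.2 ⟨hX, hXhom⟩
  have hmem : ∀ Z ∈ C'.filter (HomTraceable G), Z ≠ W →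
      Z ∈ (C.filter (HomTraceable G)).erase X := by
    intro Z hZ hZW
    simp only [hC', Finset.mem_filter, Finset.mem_union, Finset.mem_sdiff, Finset.mem_insert,
      Finset.mem_singleton, not_or, Finset.mem_erase] at hZ ⊢
    obtain ⟨hZ | rfl | rfl, hZhom⟩ := hZ
    · exact ⟨hZ.2.1, hZ.1, hZhom⟩
    · exact absurd hZhom hUhom
    · exact absurd rfl hZW
  have hle : numHomTraceable G C' ≤ numHomTraceable G C := by
    refine (Finset.card_le_card fun Z hZ => ?_).trans
      ((Finset.card_insert_le W _).trans (Finset.card_erase_add_one hmemX).le)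
    by_cases hZW : Z = W
    · exact hZW ▸ Finset.mem_insert_self _ _
    · exact Finset.mem_insert_of_mem (hmem Z hZ hZW)
  refine ⟨⟨hmin, fun C'' hC'' _ => hle.trans (MinimalFor.le h hC'')⟩, ?_⟩
  by_contra hWhom
  have hlt : numHomTraceable G C' < numHomTraceable G C := by
    refine (Finset.card_le_card fun Z hZ => hmem Z hZ ?_).trans_lt
      (Finset.card_erase_lt_of_mem hmemX)
    rintro rfl
    exact hWhom (Finset.mem_filter.1 hZ).2
  exact hlt.not_ge (MinimalFor.le h hmin)

theorem exists_move [DecidableEq V] (h : IsOptimal G C) (hX : X ∈ C) (hY : Y ∈ C) (hXY : X ≠ Y)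
    (hXhom : HomTraceable G X) {x : V} (hx : x ∈ X) (hp : IsHamPath G Y m p) {i : ℕ}
    (hi : i + 1 < m) (hxi : G.Adj x (p i)) :
    ∃ U W, IsOptimal G ((C \ {X, Y}) ∪ {U, W}) ∧ HomTraceable G W ∧ p (i + 1) ∈ W ∧ W ⊆ Y := by
  obtain ⟨A, W, rfl, hAW, hA, hW, hmemA, hmemW⟩ := hp.exists_split hi
  have dXY := h.isPathPartition.disjoint hX hY hXY
  rw [Finset.disjoint_union_right] at dXY
  obtain ⟨s, hs⟩ := hXhom x hx
  have hU : HasHamPath G (X ∪ A) s (p 0) := hs.append hA.symm dXY.1 hxi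
  have hUW : Disjoint (X ∪ A) W := by simp [Finset.disjoint_union_left, dXY.2, hAW]
  have hiW : p (i + 1) ∈ W := hmemW _ (by omega) hi
  have hunion : X ∪ A ∪ W = X ∪ (A ∪ W) := Finset.union_assoc _ _ _
  have hne : X ∪ A ≠ W := fun e => Finset.disjoint_left.1 hUW (e ▸ hiW) hiW
  have hUhom : ¬ HomTraceable G (X ∪ A) := fun hhom =>
    (h.isMinPartition.replace_pair hX hY hXY hU.traceable hW.traceable hUW
      hunion).not_adj_of_isHamEnd (by simp) (by simp) hne
      (hhom _ (Finset.mem_union_right _ (hmemA i le_rfl))) ⟨_, hW.symm⟩ (hp.adj_succ hi)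
  obtain ⟨hopt, hWhom⟩ :=
    h.replace_pair hX hY hXY hU.traceable hW.traceable hUW hunion hXhom hUhom
  exact ⟨_, W, hopt, hWhom, hiW, Finset.subset_union_right⟩

theorem exists_step (h : IsOptimal G C) (hG : IsCubic G) (hX : X ∈ C) (hXhom : HomTraceable G X)
    {x y z : V} (hx : x ∈ X) (hy : y ∉ X) (hxy : G.Adj x y) (hyz : G.Adj y z) (hzx : z ≠ x) :
    ∃ C' W, IsOptimal G C' ∧ W ∈ C' ∧ HomTraceable G W ∧ z ∈ W ∧
      ∀ Z ∈ C, HomTraceable G Z → Z ≠ X → Z ∈ C' ∧ Z ≠ W := by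
  classical
  have hC := h.isPathPartition
  obtain ⟨Y, hY, hyY⟩ := hC.exists_mem y
  have hXY : X ≠ Y := fun e => hy (e ▸ hyY)
  have hxY : x ∉ Y := fun hxY => hXY (hC.eq_of_mem hX hY hx hxY)
  have hyE : ¬ IsHamEnd G Y y := fun hE =>
    h.isMinPartition.not_adj_of_isHamEnd hX hY hXY (hXhom x hx) hE hxy
  have hzY : z ∈ Y := by
    by_contra hzY
    exact hzx ((hC.traceable hY).eq_of_adj_of_notMem hG hyY hyE hyz hxy.symm hzY hxY)
  obtain ⟨m, p, i, hp, hi, rfl, rfl⟩ :=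
    (hC.traceable hY).exists_isHamPath_succ hG hyY hzY hyz hyE ⟨x, hxy.symm, hxY⟩
  obtain ⟨U, W, hopt, hWhom, hzW, hWY⟩ := h.exists_move hX hY hXY hXhom hx hp hi hxy
  refine ⟨_, W, hopt, by simp, hWhom, hzW, fun Z hZ hZhom hZX => ?_⟩
  have hZY : Z ≠ Y := by
    rintro rfl
    exact hyE (hZhom _ hyY)
  refine ⟨by simp [hZ, hZX, hZY], ?_⟩
  rintro rfl
  exact hZY (hC.eq_of_mem hZ hY hzW hzY)

theorem eq_of_homTraceable_of_walk (hG : IsCubic G) {x w : V} :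
    ∀ (_ : G.Walk x w) {C X Y}, IsOptimal G C → X ∈ C → Y ∈ C → HomTraceable G X →
      HomTraceable G Y → x ∈ X → w ∈ Y → X = Y
  | .nil, _, _, _, h, hX, hY, _, _, hx, hw => h.isPathPartition.eq_of_mem hX hY hx hw
  | .cons hxw .nil, _, _, _, h, hX, hY, hXhom, hYhom, hx, hw => by
    by_contra hXY
    exact h.isMinPartition.not_adj_of_isHamEnd hX hY hXY (hXhom _ hx) (hYhom _ hw) hxw
  | .cons (v := y) hxy (.cons (v := z) hyz P), C, X, Y, h, hX, hY, hXhom, hYhom, hx, hw => by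
    by_contra hXY
    by_cases hyX : y ∈ X
    · exact hXY (eq_of_homTraceable_of_walk hG (.cons hyz P) h hX hY hXhom hYhom hyX hw)
    by_cases hzx : z = x
    · subst hzx
      exact hXY (eq_of_homTraceable_of_walk hG P h hX hY hXhom hYhom hx hw)
    obtain ⟨C', W, hC', hW, hWhom, hzW, hkeep⟩ := h.exists_step hG hX hXhom hx hyX hxy hyz hzx
    obtain ⟨hYC', hYW⟩ := hkeep Y hY hYhom (Ne.symm hXY)
    exact hYW (eq_of_homTraceable_of_walk hG P hC' hW hYC' hWhom hYhom hzW hw).symm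
termination_by P => P.length

theorem numHomTraceable_le_one (h : IsOptimal G C) (hG : IsCubic G) (hconn : G.Connected) :
    numHomTraceable G C ≤ 1 := by
  classical
  refine Finset.card_le_one.2 fun X hX Y hY => ?_
  rw [Finset.mem_filter] at hX hY
  obtain ⟨x, hx⟩ := (h.isPathPartition.traceable hX.1).nonempty
  obtain ⟨w, hw⟩ := (h.isPathPartition.traceable hY.1).nonempty
  obtain ⟨P⟩ := hconn.preconnected x w
  exact eq_of_homTraceable_of_walk hG P h hX.1 hY.1 hX.2 hY.2 hx hw

end IsOptimal

end Partition

section Requests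

variable {V : Type*} {G : SimpleGraph V} {X Y : Finset V} {m j k : ℕ} {q : ℕ → V}

/-- A request made by the part `X`: a vertex with property `E` together with one of its neighbours
outside `X`. The property `E` is always stronger than being an end of a Hamiltonian path of `X`. -/
def IsRequest (G : SimpleGraph V) (X : Finset V) (E : V → Prop) (r : V × V) : Prop :=
  E r.1 ∧ G.Adj r.1 r.2 ∧ r.2 ∉ X

/-- The requests in `R`, together with the sealed edges of the path `q` from index `j` on, are worth
at least `k`. -/
def IsWorth (G : SimpleGraph V) (X : Finset V) (m : ℕ) (q : ℕ → V) (R : Finset (V × V))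
    (j k : ℕ) : Prop :=
  ∃ T : Finset ℕ, (∀ i ∈ T, j ≤ i ∧ IsSealedEdge G X m q i) ∧ k ≤ T.card + requestWeight R.card

theorem Yields.exists_requests {E : V → Prop} (h : Yields G X m q E j k) :
    ∃ R, (∀ r ∈ R, IsRequest G X E r) ∧ IsWorth G X m q R j k := by
  classical
  obtain ⟨S, T, hS, hT, hk⟩ := h
  choose f hf using fun w : S => (hS w w.2).2
  have hinj : Function.Injective fun w : S => (w.1, f w) :=
    fun a b e => Subtype.ext (Prod.mk.inj e).1
  refine ⟨S.attach.image fun w => (w.1, f w), ?_, T, hT, ?_⟩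
  · simp only [Finset.forall_mem_image]
    exact fun w _ => ⟨(hS w w.2).1, hf w⟩
  · rwa [Finset.card_image_of_injective _ hinj, Finset.card_attach]

section

variable [DecidableEq V]

/-- The requests made by one end of the path `q` of a part `X`: either both neighbours of the last
vertex outside `X` are requested, or the requests and sealed edges from index `j` on are worth at
least four. -/
structure IsTailRequests (G : SimpleGraph V) (X : Finset V) (m : ℕ) (q : ℕ → V) (j : ℕ)
    (R : Finset (V × V)) : Prop where
  isRequest : ∀ r ∈ R, IsRequest G X (IsReroutedEnd G X m q j) r
  pair_or_isWorth : (j = m - 2 ∧ ∃ a b, a ≠ b ∧ R = {(q (m - 1), a), (q (m - 1), b)}) ∨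
    IsWorth G X m q R j 4

/-- The requests made by a part `X` with path `q`: either they are worth at least eight together
with the sealed edges, or they are made by the two ends of `q`. -/
def IsPartRequests (G : SimpleGraph V) (X : Finset V) (m : ℕ) (q : ℕ → V)
    (R : Finset (V × V)) : Prop :=
  IsWorth G X m q R 0 8 ∨
    ∃ j j' Q Q', j + 1 < m ∧ m - 1 ≤ j + j' ∧ IsTailRequests G X m q j Q ∧
      IsTailRequests G X m (fun i => q (m - 1 - i)) j' Q' ∧ R = Q ∪ Q'

theorem IsChordlessEnd.exists_isTailRequests (hc : IsChordlessEnd G m q)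
    (h : IsHamPath G X m q) (hG : IsCubic G) : ∃ R, IsTailRequests G X m q (m - 2) R := by
  have hout : ∀ a, a ≠ q (m - 2) → G.Adj (q (m - 1)) a → a ∉ X := by
    intro a hne ha haX
    obtain ⟨i, hi, rfl⟩ := (h.mem_iff a).1 haX
    exact hne (by rw [hc i hi ha])
  obtain ⟨a, ha, -, hqa⟩ := hG.exists_adj_ne_ne (q (m - 1)) (q (m - 2)) (q (m - 2))
  obtain ⟨b, hb, hba, hqb⟩ := hG.exists_adj_ne_ne (q (m - 1)) (q (m - 2)) a
  have hlast : IsReroutedEnd G X m q (m - 2) (q (m - 1)) := (h.isRerouting _).isReroutedEnd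
  refine ⟨{(q (m - 1), a), (q (m - 1), b)}, ?_, .inl ⟨rfl, a, b, hba.symm, rfl⟩⟩
  simp only [Finset.forall_mem_insert, Finset.mem_singleton, forall_eq]
  exact ⟨⟨hlast, hqa, hout a ha hqa⟩, hlast, hqb, hout b hb hqb⟩

theorem IsTail.exists_isTailRequests (ht : IsTail G X m q j) (h : IsHamPath G X m q)
    (hG : IsCubic G) : ∃ R, IsTailRequests G X m q j R := by
  obtain ⟨rfl, hc⟩ | hy := ht
  · exact hc.exists_isTailRequests h hG
  · obtain ⟨R, hR, hworth⟩ := hy.exists_requests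
    exact ⟨R, hR, .inr hworth⟩

theorem IsSettled.exists_isPartRequests (hs : IsSettled G X m q) (h : IsHamPath G X m q)
    (hG : IsCubic G) :
    ∃ R, (∀ r ∈ R, IsRequest G X (IsHamEnd G X) r) ∧ IsPartRequests G X m q R := by
  obtain hy | ⟨j, j', hj, hjj, ht, ht'⟩ := hs
  · obtain ⟨R, hR, hworth⟩ := hy.exists_requests
    exact ⟨R, hR, .inl hworth⟩
  · obtain ⟨Q, hQ⟩ := ht.exists_isTailRequests h hG
    obtain ⟨Q', hQ'⟩ := ht'.exists_isTailRequests h.reverse hG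
    refine ⟨Q ∪ Q', fun r hr => ?_, .inr ⟨j, j', Q, Q', hj, hjj, hQ, hQ', rfl⟩⟩
    rcases Finset.mem_union.1 hr with hr | hr
    · exact ⟨(hQ.isRequest r hr).1.isHamEnd, (hQ.isRequest r hr).2⟩
    · exact ⟨(hQ'.isRequest r hr).1.isHamEnd, (hQ'.isRequest r hr).2⟩

end

variable {C : Finset (Finset V)} {p : Finset V → ℕ → V} {R : Finset V → Finset (V × V)}

/-- Some part of `C` requests the vertex `a`. -/
def IsRequested (C : Finset (Finset V)) (R : Finset V → Finset (V × V)) (a : V) : Prop :=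
  ∃ X ∈ C, ∃ u, (u, a) ∈ R X

/-- The vertex `a` has a predecessor on the path of its part, and that predecessor is requested. -/
def HasRequestedPred (C : Finset (Finset V)) (p : Finset V → ℕ → V)
    (R : Finset V → Finset (V × V)) (a : V) : Prop :=
  ∃ P ∈ C, ∃ i, i + 1 < P.card ∧ p P (i + 1) = a ∧ IsRequested C R (p P i)

open Classical in
/-- The value of a request for `a`. It is the number of edges of the path through `a` that the
request may claim: the edge to the successor of `a`, and the edge to its predecessor unless that one
is requested as well. -/
noncomputable def weight (C : Finset (Finset V)) (p : Finset V → ℕ → V)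
    (R : Finset V → Finset (V × V)) (a : V) : ℕ :=
  if HasRequestedPred C p R a then 1 else 2

open Classical in
/-- The edges of the path `q 0, …, q (m - 1)`, given by the indices of their first ends, that no
request claims. -/
noncomputable def freeEdges (C : Finset (Finset V)) (R : Finset V → Finset (V × V)) (m : ℕ)
    (q : ℕ → V) : Finset ℕ :=
  (Finset.range (m - 1)).filter fun i => ¬ IsRequested C R (q i) ∧ ¬ IsRequested C R (q (i + 1))

theorem one_le_weight (a : V) : 1 ≤ weight C p R a := by
  unfold weight
  split_ifs <;> omega

theorem weight_eq_two {a : V} (h : ¬ HasRequestedPred C p R a) : weight C p R a = 2 := if_neg h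

theorem mem_freeEdges {i : ℕ} : i ∈ freeEdges C R m q ↔
    i + 1 < m ∧ ¬ IsRequested C R (q i) ∧ ¬ IsRequested C R (q (i + 1)) := by
  simp only [freeEdges, Finset.mem_filter, Finset.mem_range, Nat.lt_sub_iff_add_lt]

theorem mem_freeEdges_of_reverse {i : ℕ} (h : i ∈ freeEdges C R m fun i => q (m - 1 - i)) :
    m - 2 - i ∈ freeEdges C R m q := by
  obtain ⟨hi, h1, h2⟩ := mem_freeEdges.1 h
  refine mem_freeEdges.2 ⟨by omega, ?_, ?_⟩
  · rwa [show m - 2 - i = m - 1 - (i + 1) by omega]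
  · rwa [show m - 2 - i + 1 = m - 1 - i by omega]

theorem card_add_card_le_card_freeEdges {j' : ℕ} {T T' : Finset ℕ} (hjj : m - 1 ≤ j + j')
    (hT : ∀ i ∈ T, j ≤ i ∧ i ∈ freeEdges C R m q)
    (hT' : ∀ i ∈ T', j' ≤ i ∧ i ∈ freeEdges C R m fun i => q (m - 1 - i)) :
    T.card + T'.card ≤ (freeEdges C R m q).card := by
  have hlt : ∀ i ∈ T', i + 1 < m := fun i hi => (mem_freeEdges.1 (hT' i hi).2).1
  have hinj : Set.InjOn (fun i => m - 2 - i) (T' : Set ℕ) := by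
    intro a ha b hb (e : m - 2 - a = m - 2 - b)
    have := hlt a ha
    have := hlt b hb
    omega
  have hdisj : Disjoint T (T'.image fun i => m - 2 - i) := by
    simp only [Finset.disjoint_left, Finset.mem_image, not_exists, not_and]
    rintro _ ha b hb rfl
    have := (hT _ ha).1
    have := (hT' b hb).1
    have := hlt b hb
    omega
  rw [← Finset.card_image_of_injOn hinj, ← Finset.card_union_of_disjoint hdisj]
  refine Finset.card_le_card (Finset.union_subset (fun i hi => (hT i hi).2) ?_)
  exact Finset.image_subset_iff.2 fun i hi => mem_freeEdges_of_reverse (hT' i hi).2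

theorem IsHamPath.exists_eq_union_singleton [DecidableEq V] (h : IsHamPath G X m q) (hm : 2 ≤ m) :
    ∃ A, X = A ∪ {q (m - 1)} ∧ q (m - 1) ∉ A ∧ HasHamPath G A (q 0) (q (m - 2)) := by
  refine ⟨(Finset.Ico 0 (m - 1)).image q, ?_, ?_, _, _, h.segment (by omega) (by omega),
    by simp, by simp; rfl⟩
  · rw [h.eq_image, ← Finset.range_eq_Ico, Finset.union_comm, ← Finset.insert_eq,
      ← Finset.image_insert, ← Finset.range_add_one, Nat.sub_add_cancel (by omega)]
  · simp only [Finset.mem_image, Finset.mem_Ico, not_exists, not_and]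
    rintro i ⟨-, hi⟩ e
    exact h.ne (by omega) (by omega) hi.ne e

/-- A path partition with as few parts as possible, each part `X` with a Hamiltonian path `p X` and
requests `R X`. -/
structure IsRequestSystem [DecidableEq V] (G : SimpleGraph V) (C : Finset (Finset V))
    (p : Finset V → ℕ → V) (R : Finset V → Finset (V × V)) : Prop where
  isCubic : IsCubic G
  isMinPartition : IsMinPartition G C
  isHamPath : ∀ ⦃X⦄, X ∈ C → IsHamPath G X X.card (p X)
  isRequest : ∀ ⦃X⦄, X ∈ C → ∀ ⦃r⦄, r ∈ R X → IsRequest G X (IsHamEnd G X) r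
  isPartRequests : ∀ ⦃X⦄, X ∈ C → ¬ HomTraceable G X → IsPartRequests G X X.card (p X) (R X)

theorem IsHamEnd.mem {u : V} (h : IsHamEnd G X u) : u ∈ X := by
  obtain ⟨_, m, q, h, -, rfl⟩ := h
  have := h.pos
  exact h.mem (by omega)

theorem HasHamPath.ne_of_one_lt_card {u w : V} (h : HasHamPath G X u w) (hX : 1 < X.card) :
    u ≠ w := by
  obtain ⟨m, q, hq, rfl, rfl⟩ := h
  rw [hq.card_eq] at hX
  exact hq.ne hq.pos (by omega) (by omega)

namespace IsRequestSystem

variable [DecidableEq V] (h : IsRequestSystem G C p R)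

include h

theorem ne_of_mem {P : Finset V} (hX : X ∈ C) {u a : V} (hu : (u, a) ∈ R X) (ha : a ∈ P) :
    X ≠ P := by
  rintro rfl
  exact (h.isRequest hX hu).2.2 ha

theorem notMem_of_mem {P : Finset V} (hX : X ∈ C) (hP : P ∈ C) {u a : V} (hu : (u, a) ∈ R X)
    (ha : a ∈ P) : u ∉ P := fun huP =>
  h.ne_of_mem hX hu ha
    (h.isMinPartition.isPathPartition.eq_of_mem hX hP (h.isRequest hX hu).1.mem huP)

theorem not_isHamEnd {P : Finset V} (hP : P ∈ C) {a : V} (ha : a ∈ P)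
    (hA : IsRequested C R a) : ¬ IsHamEnd G P a := by
  obtain ⟨X, hX, u, hu⟩ := hA
  have hr := h.isRequest hX hu
  exact fun hE => h.isMinPartition.not_adj_of_isHamEnd hX hP (h.ne_of_mem hX hu ha) hr.1 hE hr.2.1

theorem not_isRequested_of_isSealed {P : Finset V} (hP : P ∈ C) {a : V} (ha : a ∈ P)
    (hs : IsSealed G P a) : ¬ IsRequested C R a := by
  intro hA
  rcases hs with hs | hs
  · exact h.not_isHamEnd hP ha hA hs
  · obtain ⟨X, hX, u, hu⟩ := hA
    exact hs ⟨u, (h.isRequest hX hu).2.1.symm, h.notMem_of_mem hX hP hu ha⟩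

theorem mem_freeEdges_of_isSealedEdge (hX : X ∈ C) (hq : IsHamPath G X m q) {i : ℕ}
    (hi : IsSealedEdge G X m q i) : i ∈ freeEdges C R m q :=
  mem_freeEdges.2 ⟨hi.lt,
    h.not_isRequested_of_isSealed hX (hq.mem (Nat.lt_of_succ_lt hi.lt)) hi.left,
    h.not_isRequested_of_isSealed hX (hq.mem hi.lt) hi.right⟩

theorem requester_unique (hX : X ∈ C) (hY : Y ∈ C) {u w a : V} (hu : (u, a) ∈ R X)
    (hw : (w, a) ∈ R Y) : u = w := by
  obtain ⟨P, hP, ha⟩ := h.isMinPartition.isPathPartition.exists_mem a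
  exact (h.isMinPartition.isPathPartition.traceable hP).eq_of_adj_of_notMem h.isCubic ha
    (h.not_isHamEnd hP ha ⟨X, hX, u, hu⟩) (h.isRequest hX hu).2.1.symm
    (h.isRequest hY hw).2.1.symm (h.notMem_of_mem hX hP hu ha) (h.notMem_of_mem hY hP hw ha)

theorem exists_request_pred (hX : X ∈ C) {u a : V} (hu : (u, a) ∈ R X)
    (ha : HasRequestedPred C p R a) :
    ∃ P ∈ C, ∃ i, i + 1 < P.card ∧ p P (i + 1) = a ∧
      ∃ w, (w, p P i) ∈ R X ∧ ¬ HasHamPath G X u w := by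
  obtain ⟨P, hP, i, hi, rfl, Y, hY, w, hw⟩ := ha
  have hp := h.isHamPath hP
  have hXP := h.ne_of_mem hX hu (hp.mem hi)
  have hYP := h.ne_of_mem hY hw (hp.mem (by omega))
  obtain ⟨huE, huA, -⟩ := h.isRequest hX hu
  obtain ⟨hwE, hwA, -⟩ := h.isRequest hY hw
  obtain rfl : Y = X := h.isMinPartition.eq_of_adj_succ hP hY hX hYP.symm hXP.symm hp hi hwE huE
    hwA.symm huA.symm
  exact ⟨P, hP, i, hi, rfl, w, hw, fun hE => h.isMinPartition.not_hasHamPath_of_adj_succ hP hY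
    hYP.symm hp hi hwA.symm huA.symm hE.symm⟩

theorem exists_index : ∃ idx : V → ℕ, ∀ P ∈ C, ∀ i < P.card, idx (p P i) = i := by
  have hC := h.isMinPartition.isPathPartition
  choose Q hQ hmem using hC.exists_mem
  choose idx hidx using fun a => ((h.isHamPath (hQ a)).mem_iff a).1 (hmem a)
  refine ⟨idx, fun P hP i hi => ?_⟩
  have hi' := (h.isHamPath hP).mem hi
  have heq := hidx (p P i)
  rw [hC.eq_of_mem (hQ _) hP (hmem _) hi'] at heq
  exact (h.isHamPath hP).inj heq.1 hi heq.2

/-- The request for the vertex of least index on its path is worth two: a predecessor that is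
requested too would be requested from `S`. -/
theorem exists_weight_eq_two (hX : X ∈ C) {S : Finset (V × V)} (hS : S ⊆ R X) (hne : S.Nonempty)
    (hE : ∀ s ∈ S, ∀ r ∈ R X, r ∉ S → HasHamPath G X s.1 r.1) :
    ∃ s ∈ S, weight C p R s.2 = 2 := by
  obtain ⟨idx, hidx⟩ := h.exists_index
  obtain ⟨⟨u, a⟩, hs, hmin⟩ := S.exists_min_image (fun s => idx s.2) hne
  refine ⟨(u, a), hs, weight_eq_two fun ha => ?_⟩
  obtain ⟨P, hP, i, hi, rfl, w, hw, hn⟩ := h.exists_request_pred hX (hS hs) ha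
  have hwS : (w, p P i) ∈ S := by
    by_contra hwS
    exact hn (hE _ hs _ hw hwS)
  have hle : idx (p P (i + 1)) ≤ idx (p P i) := hmin _ hwS
  rw [hidx P hP _ hi, hidx P hP _ (by omega)] at hle
  omega

theorem requestWeight_le_sum (hX : X ∈ C) {S : Finset (V × V)} (hS : S ⊆ R X)
    (hE : ∀ s ∈ S, ∀ r ∈ R X, r ∉ S → HasHamPath G X s.1 r.1) :
    requestWeight S.card ≤ ∑ s ∈ S, weight C p R s.2 := by
  obtain rfl | hne := S.eq_empty_or_nonempty
  · simp [requestWeight]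
  obtain ⟨s, hs, hs2⟩ := h.exists_weight_eq_two hX hS hne hE
  have hlt : ∑ _s ∈ S, 1 < ∑ s ∈ S, weight C p R s.2 :=
    Finset.sum_lt_sum (fun s _ => one_le_weight s.2) ⟨s, hs, by omega⟩
  rw [requestWeight, if_neg (Finset.card_ne_zero.2 hne)]
  simpa using hlt

theorem exists_freeEdges_of_isWorth (hX : X ∈ C) (hq : IsHamPath G X m q) {S : Finset (V × V)}
    (hS : S ⊆ R X) (hE : ∀ s ∈ S, ∀ r ∈ R X, r ∉ S → HasHamPath G X s.1 r.1)
    (hworth : IsWorth G X m q S j k) :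
    ∃ T : Finset ℕ, (∀ i ∈ T, j ≤ i ∧ i ∈ freeEdges C R m q) ∧
      k ≤ T.card + ∑ s ∈ S, weight C p R s.2 := by
  obtain ⟨T, hT, hk⟩ := hworth
  exact ⟨T, fun i hi => ⟨(hT i hi).1, h.mem_freeEdges_of_isSealedEdge hX hq (hT i hi).2⟩,
    hk.trans (Nat.add_le_add_left (h.requestWeight_le_sum hX hS hE) _)⟩

theorem not_isRequested_of_hasRequestedPred (hX : X ∈ C) (hq : IsHamPath G X m q) (hm : 2 ≤ m)
    {a b : V} (ha : (q (m - 1), a) ∈ R X) (hb : (q (m - 1), b) ∈ R X)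
    (hE : ∀ r ∈ R X, r ≠ (q (m - 1), a) → r ≠ (q (m - 1), b) → HasHamPath G X (q (m - 1)) r.1)
    (hpred : HasRequestedPred C p R a) : ¬ IsRequested C R (q (m - 2)) := by
  rintro ⟨Z, hZ, y, hy⟩
  obtain ⟨P, hP, i, hi, rfl, w, hw, hn⟩ := h.exists_request_pred hX ha hpred
  have hp := h.isHamPath hP
  obtain rfl : p P i = b := by
    by_contra hib
    refine hn (hE _ hw (fun e => ?_) fun e => hib (Prod.mk.inj e).2)
    exact hp.ne (by omega) hi (by omega) (Prod.mk.inj e).2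
  have haP := hp.mem hi
  have hXP := h.ne_of_mem hX ha haP
  have hXZ := h.ne_of_mem hZ hy (hq.mem (by omega))
  have haE := h.not_isHamEnd hP haP ⟨X, hX, _, ha⟩
  have haA := (h.isRequest hX ha).2.1
  have hbA := (h.isRequest hX hb).2.1
  obtain ⟨hyE, hyA, -⟩ := h.isRequest hZ hy
  obtain ⟨A, hA, hqA, hpath⟩ := hq.exists_eq_union_singleton hm
  rw [hA] at hX hXP hXZ
  exact h.isMinPartition.not_adj_of_adj_consecutive h.isCubic hX hP hZ hXP hXZ.symm hqA hpath haP
    (hp.mem (by omega)) haA hbA (hp.adj_succ hi).symm haE hyE hyA.symm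

theorem exists_freeEdges_of_pair (hX : X ∈ C) (hq : IsHamPath G X m q) (hm : 2 ≤ m) {a b : V}
    (hab : a ≠ b) (hS : {(q (m - 1), a), (q (m - 1), b)} ⊆ R X)
    (hE : ∀ r ∈ R X, r ∉ ({(q (m - 1), a), (q (m - 1), b)} : Finset (V × V)) →
      HasHamPath G X (q (m - 1)) r.1) :
    ∃ T : Finset ℕ, (∀ i ∈ T, m - 2 ≤ i ∧ i ∈ freeEdges C R m q) ∧
      4 ≤ T.card + (weight C p R a + weight C p R b) := by
  have ha : (q (m - 1), a) ∈ R X := hS (by simp)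
  have hb : (q (m - 1), b) ∈ R X := hS (by simp)
  by_cases hA : IsRequested C R (q (m - 2))
  · have ha2 : ¬ HasRequestedPred C p R a := fun hpred =>
      h.not_isRequested_of_hasRequestedPred hX hq hm ha hb
        (fun r hr h1 h2 => hE r hr (by simp [h1, h2])) hpred hA
    have hb2 : ¬ HasRequestedPred C p R b := fun hpred =>
      h.not_isRequested_of_hasRequestedPred hX hq hm hb ha
        (fun r hr h1 h2 => hE r hr (by simp [h1, h2])) hpred hA
    exact ⟨∅, by simp, by simp [weight_eq_two ha2, weight_eq_two hb2]⟩
  · have hne : (q (m - 1), a) ≠ (q (m - 1), b) := fun e => hab (Prod.mk.inj e).2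
    have hweight := h.requestWeight_le_sum hX hS (by simpa using hE)
    rw [Finset.sum_pair hne, Finset.card_pair hne] at hweight
    have hfree : m - 2 ∈ freeEdges C R m q := by
      refine mem_freeEdges.2 ⟨by omega, hA, ?_⟩
      rw [show m - 2 + 1 = m - 1 by omega]
      exact h.not_isRequested_of_isSealed hX (hq.mem (by omega)) hq.isHamEnd_last.isSealed
    refine ⟨{m - 2}, by simpa using ⟨by omega, hfree⟩, ?_⟩
    simp only [requestWeight, OfNat.ofNat_ne_zero, if_false] at hweight
    simp only [Finset.card_singleton]
    omega

theorem exists_freeEdges_of_isTailRequests (hX : X ∈ C) (hq : IsHamPath G X m q) (hm : 2 ≤ m)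
    {S : Finset (V × V)} (hSR : IsTailRequests G X m q j S) (hS : S ⊆ R X)
    (hE : ∀ s ∈ S, ∀ r ∈ R X, r ∉ S → HasHamPath G X s.1 r.1) :
    ∃ T : Finset ℕ, (∀ i ∈ T, j ≤ i ∧ i ∈ freeEdges C R m q) ∧
      4 ≤ T.card + ∑ s ∈ S, weight C p R s.2 := by
  obtain ⟨rfl, a, b, hab, rfl⟩ | hworth := hSR.pair_or_isWorth
  · rw [Finset.sum_pair fun e => hab (Prod.mk.inj e).2]
    exact h.exists_freeEdges_of_pair hX hq hm hab hS (hE (q (m - 1), a) (by simp))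
  · exact h.exists_freeEdges_of_isWorth hX hq hS hE hworth

theorem eight_le_card_freeEdges_add_sum (hX : X ∈ C) (hhom : ¬ HomTraceable G X) :
    8 ≤ (freeEdges C R X.card (p X)).card + ∑ r ∈ R X, weight C p R r.2 := by
  have hq := h.isHamPath hX
  obtain hworth | ⟨j, j', Q, Q', hj, hjj, hQ, hQ', hR⟩ := h.isPartRequests hX hhom
  · obtain ⟨T, hT, h8⟩ := h.exists_freeEdges_of_isWorth hX hq (le_refl (R X))
      (fun s _ r hr hn => absurd hr hn) hworth
    have := Finset.card_le_card fun i hi => (hT i hi).2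
    omega
  have hm := hq.three_le hhom
  have hjoin : ∀ r ∈ Q, ∀ s ∈ Q', HasHamPath G X s.1 r.1 := fun r hr s hs =>
    hq.hasHamPath_of_isReroutedEnd hj hjj (hQ.isRequest r hr).1 (hQ'.isRequest s hs).1
  have hdisj : Disjoint Q Q' := by
    rw [Finset.disjoint_left]
    intro r hr hr'
    exact (hjoin r hr r hr').ne_of_one_lt_card (by omega) rfl
  have hmem : ∀ r ∈ R X, r ∈ Q ∨ r ∈ Q' := fun r hr => Finset.mem_union.1 (hR ▸ hr)
  obtain ⟨T, hT, h4⟩ := h.exists_freeEdges_of_isTailRequests hX hq (by omega) hQ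
    (hR ▸ Finset.subset_union_left)
    fun s hs r hr hn => (hjoin s hs r ((hmem r hr).resolve_left hn)).symm
  obtain ⟨T', hT', h4'⟩ := h.exists_freeEdges_of_isTailRequests hX hq.reverse (by omega) hQ'
    (hR ▸ Finset.subset_union_right)
    fun s hs r hr hn => hjoin r ((hmem r hr).resolve_right hn) s hs
  have hle := card_add_card_le_card_freeEdges hjj hT hT'
  rw [hR, Finset.sum_union hdisj]
  omega

end IsRequestSystem

end Requests

section Counting

variable {V : Type*} {G : SimpleGraph V} {X Y : Finset V} {C : Finset (Finset V)} {m : ℕ}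
  {p : Finset V → ℕ → V} {R : Finset V → Finset (V × V)}

/-- Each element of a set `α` of indices claims the step to its successor and, unless its
predecessor belongs to `α` as well, the step from its predecessor. Every step is then claimed once
or has both ends outside `α`. -/
theorem sum_claims_add_card_unclaimed (α : ℕ → Prop) [DecidablePred α] (h0 : ¬ α 0) (l : ℕ) :
    (∑ i ∈ Finset.range (l + 1), if α i then (if α (i - 1) then 1 else 2) else 0) +
      ((Finset.range l).filter fun i => ¬ α i ∧ ¬ α (i + 1)).card = l + if α l then 1 else 0 := by
  induction l with
  | zero => simp [h0]
  | succ l ih =>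
    rw [Finset.card_filter] at ih ⊢
    rw [Finset.sum_range_succ, Finset.sum_range_succ fun i => if ¬ α i ∧ ¬ α (i + 1) then 1 else 0,
      Nat.add_sub_cancel]
    by_cases h1 : α l <;> by_cases h2 : α (l + 1) <;>
      simp only [h1, h2, if_true, if_false, not_true, not_false_eq_true, and_true, and_false]
        at ih ⊢ <;> omega

namespace IsRequestSystem

variable [DecidableEq V] (h : IsRequestSystem G C p R)

include h

theorem hasRequestedPred_iff (hX : X ∈ C) {i : ℕ} (hi : i < X.card) (h0 : i ≠ 0) :
    HasRequestedPred C p R (p X i) ↔ IsRequested C R (p X (i - 1)) := by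
  have hp := h.isHamPath hX
  constructor
  · rintro ⟨P, hP, l, hl, e, hA⟩
    obtain rfl : P = X := h.isMinPartition.isPathPartition.eq_of_mem hP hX
      ((h.isHamPath hP).mem hl) (e ▸ hp.mem hi)
    rwa [← hp.inj hl hi e, Nat.add_sub_cancel]
  · intro hA
    have hi1 : i - 1 + 1 = i := by omega
    exact ⟨X, hX, i - 1, by omega, by rw [hi1], hA⟩

open Classical in
theorem sum_weight_add_card_freeEdges (hX : X ∈ C) :
    ∑ a ∈ X.filter (IsRequested C R), weight C p R a + (freeEdges C R X.card (p X)).card + 1 =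
      X.card := by
  have hp := h.isHamPath hX
  have hpos := hp.pos
  have hfirst := h.not_isRequested_of_isSealed hX (hp.mem hpos) hp.isHamEnd_zero.isSealed
  have hlast := h.not_isRequested_of_isSealed hX (hp.mem (by omega)) hp.isHamEnd_last.isSealed
  have hclaims := sum_claims_add_card_unclaimed (fun i => IsRequested C R (p X i)) hfirst
    (X.card - 1)
  rw [if_neg hlast, Nat.sub_add_cancel hpos] at hclaims
  have hsum : ∑ a ∈ X.filter (IsRequested C R), weight C p R a =
      ∑ i ∈ Finset.range X.card, if IsRequested C R (p X i) then
        (if IsRequested C R (p X (i - 1)) then 1 else 2) else 0 := by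
    have himage : X.filter (IsRequested C R) =
        ((Finset.range X.card).image (p X)).filter (IsRequested C R) := by rw [← hp.eq_image]
    rw [himage, Finset.sum_filter, Finset.sum_image fun a ha b hb e =>
      hp.inj (by simpa using ha) (by simpa using hb) e]
    refine Finset.sum_congr rfl fun i hi => ?_
    by_cases hA : IsRequested C R (p X i)
    · have h0 : i ≠ 0 := by
        rintro rfl
        exact hfirst hA
      simp only [weight, h.hasRequestedPred_iff hX (Finset.mem_range.1 hi) h0]
    · simp only [if_neg hA]
  rw [hsum]
  unfold freeEdges
  omega

theorem injOn_snd : Set.InjOn Prod.snd (C.biUnion R : Set (V × V)) := by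
  rintro ⟨u, a⟩ hu ⟨w, b⟩ hw (rfl : a = b)
  simp only [Finset.coe_biUnion, Set.mem_iUnion, Finset.mem_coe] at hu hw
  obtain ⟨X, hX, hu⟩ := hu
  obtain ⟨Y, hY, hw⟩ := hw
  rw [h.requester_unique hX hY hu hw]

open Classical in
theorem sum_weight_requests_le :
    ∑ X ∈ C, ∑ r ∈ R X, weight C p R r.2 ≤
      ∑ X ∈ C, ∑ a ∈ X.filter (IsRequested C R), weight C p R a := by
  have hC := h.isMinPartition.isPathPartition
  have hdisjR : (C : Set (Finset V)).PairwiseDisjoint R := by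
    refine fun X hX Y hY hXY => Finset.disjoint_left.2 fun r hrX hrY => hXY ?_
    exact hC.eq_of_mem hX hY (h.isRequest hX hrX).1.mem (h.isRequest hY hrY).1.mem
  have hdisj : (C : Set (Finset V)).PairwiseDisjoint fun X => X.filter (IsRequested C R) :=
    fun X hX Y hY hXY => Finset.disjoint_filter_filter (hC.disjoint hX hY hXY)
  rw [← Finset.sum_biUnion hdisjR, ← Finset.sum_biUnion hdisj,
    ← Finset.sum_image (f := weight C p R) h.injOn_snd]
  refine Finset.sum_le_sum_of_subset fun a ha => ?_
  simp only [Finset.mem_image, Finset.mem_biUnion] at ha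
  obtain ⟨⟨u, a⟩, ⟨X, hX, hu⟩, rfl⟩ := ha
  obtain ⟨P, hP, haP⟩ := hC.exists_mem a
  simp only [Finset.mem_biUnion, Finset.mem_filter]
  exact ⟨P, hP, haP, X, hX, u, hu⟩

end IsRequestSystem

theorem IsPathPartition.exists_isBoundary (hC : IsPathPartition G C) (hconn : G.Connected)
    (hcard : 2 ≤ C.card) (hX : X ∈ C) : ∃ o ∈ X, IsBoundary G X o := by
  obtain ⟨Y, hY, hne⟩ := Finset.exists_mem_ne hcard X
  obtain ⟨x, hx⟩ := (hC.traceable hX).nonempty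
  obtain ⟨y, hy⟩ := (hC.traceable hY).nonempty
  have hyX : y ∉ X := fun hyX => hne (hC.eq_of_mem hY hX hy hyX)
  obtain ⟨w⟩ := hconn.preconnected x y
  obtain ⟨d, -, hfst, hsnd⟩ := w.exists_boundary_dart (X : Set V) hx hyX
  exact ⟨d.fst, hfst, d.snd, d.adj, hsnd⟩

theorem IsMinPartition.exists_isRequestSystem [DecidableEq V] (hC : IsMinPartition G C)
    (hG : IsCubic G) (hconn : G.Connected) (hcard : 2 ≤ C.card) :
    ∃ p R, IsRequestSystem G C p R := by
  have hpart : ∀ X : C, ∃ (q : ℕ → V) (Q : Finset (V × V)), IsHamPath G X.1 X.1.card q ∧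
      (∀ r ∈ Q, IsRequest G X (IsHamEnd G X.1) r) ∧
      (¬ HomTraceable G X.1 → IsPartRequests G X X.1.card q Q) := by
    rintro ⟨X, hX⟩
    obtain ⟨_, _, m, q, hq, -, -⟩ := hC.isPathPartition.traceable hX
    obtain rfl := hq.card_eq
    by_cases hhom : HomTraceable G X
    · exact ⟨q, ∅, hq, by simp, absurd hhom⟩
    · obtain ⟨o, hoX, ho⟩ := hC.isPathPartition.exists_isBoundary hconn hcard hX
      obtain ⟨q, hq, hsettled⟩ := exists_isSettled hq hG hhom hoX ho
      obtain ⟨Q, hQ, hpartQ⟩ := hsettled.exists_isPartRequests hq hG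
      exact ⟨q, Q, hq, hQ, fun _ => hpartQ⟩
  choose q Q hq hQ hpartQ using hpart
  have := hconn.nonempty
  refine ⟨fun X => if hX : X ∈ C then q ⟨X, hX⟩ else fun _ => Classical.arbitrary V,
    fun X => if hX : X ∈ C then Q ⟨X, hX⟩ else ∅, hG, hC, fun X hX => ?_, fun X hX => ?_,
    fun X hX => ?_⟩
  · simpa only [dif_pos hX] using hq ⟨X, hX⟩
  · simpa only [dif_pos hX] using hQ ⟨X, hX⟩
  · simpa only [dif_pos hX] using hpartQ ⟨X, hX⟩

theorem IsPathPartition.sum_card [Fintype V] (hC : IsPathPartition G C) :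
    ∑ X ∈ C, X.card = Fintype.card V := by
  classical
  have hunion : C.biUnion id = Finset.univ := Finset.eq_univ_of_forall fun v => by
    simpa using hC.exists_mem v
  rw [← Finset.card_univ, ← hunion, Finset.card_biUnion hC.pairwiseDisjoint]
  rfl

theorem IsOptimal.nine_mul_card_le [Fintype V] (hC : IsOptimal G C) (hG : IsCubic G)
    (hconn : G.Connected) : 9 * C.card ≤ Fintype.card V + 8 := by
  classical
  have hpos : 0 < Fintype.card V := Fintype.card_pos_iff.2 hconn.nonempty
  obtain hcard | hcard := Nat.lt_or_ge C.card 2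
  · omega
  obtain ⟨p, R, h⟩ := hC.isMinPartition.exists_isRequestSystem hG hconn hcard
  have hlocal : ∀ X ∈ C, 9 + ∑ a ∈ X.filter (IsRequested C R), weight C p R a ≤
      X.card + ∑ r ∈ R X, weight C p R r.2 + if HomTraceable G X then 8 else 0 := by
    intro X hX
    have hedges := h.sum_weight_add_card_freeEdges hX
    split_ifs with hhom
    · omega
    · have := h.eight_le_card_freeEdges_add_sum hX hhom
      omega
  have hsum := Finset.sum_le_sum hlocal
  have hhom : ∑ X ∈ C, (if HomTraceable G X then 8 else 0) = numHomTraceable G C * 8 := by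
    rw [← Finset.sum_filter, Finset.sum_const, smul_eq_mul, numHomTraceable]
  rw [Finset.sum_add_distrib, Finset.sum_add_distrib, Finset.sum_add_distrib, hhom,
    hC.isPathPartition.sum_card, Finset.sum_const, smul_eq_mul] at hsum
  have hrequests := h.sum_weight_requests_le
  have hone := hC.numHomTraceable_le_one hG hconn
  omega

theorem IsHamPath.exists_isPath {q : ℕ → V} (h : IsHamPath G X m q) :
    ∃ (u v : V) (w : G.Walk u v), w.IsPath ∧ ∀ x, x ∈ w.support ↔ x ∈ X := by
  have hne : (List.range m).map q ≠ [] := by simpa using h.pos.ne'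
  have hchain : ((List.range m).map q).IsChain G.Adj := by
    rw [List.isChain_map, List.isChain_iff_getElem]
    intro i hi
    simpa using h.adj_succ (by simpa using hi)
  refine ⟨_, _, SimpleGraph.Walk.ofSupport _ hne hchain, ?_, fun x => ?_⟩
  · rw [SimpleGraph.Walk.isPath_def, SimpleGraph.Walk.support_ofSupport]
    exact List.Nodup.map_on (fun i hi j hj e => h.inj (by simpa using hi) (by simpa using hj) e)
      List.nodup_range
  · rw [SimpleGraph.Walk.support_ofSupport, h.mem_iff]
    simp

theorem IsPathPartition.exists_walks (hC : IsPathPartition G C) :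
    ∃ L : List (Σ (u : V) (v : V), G.Walk u v), L.length = C.card ∧ (∀ p ∈ L, p.2.2.IsPath) ∧
      L.Pairwise (fun p q => ∀ x ∈ p.2.2.support, x ∉ q.2.2.support) ∧
      ∀ x, ∃ p ∈ L, x ∈ p.2.2.support := by
  have hwalk : ∀ X : C, ∃ w : Σ (u : V) (v : V), G.Walk u v, w.2.2.IsPath ∧
      ∀ x, x ∈ w.2.2.support ↔ x ∈ X.1 := by
    rintro ⟨X, hX⟩
    obtain ⟨_, _, m, q, hq, -, -⟩ := hC.traceable hX
    obtain ⟨u, v, w, hw⟩ := hq.exists_isPath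
    exact ⟨⟨u, v, w⟩, hw⟩
  choose f hpath hsupport using hwalk
  refine ⟨C.attach.toList.map f, by simp, ?_, ?_, fun x => ?_⟩
  · rintro _ hw
    obtain ⟨X, -, rfl⟩ := List.mem_map.1 hw
    exact hpath X
  · refine List.pairwise_map.2 (C.attach.nodup_toList.imp fun hne x hx hy => hne ?_)
    rw [hsupport] at hx hy
    exact Subtype.ext (hC.eq_of_mem (Subtype.prop _) (Subtype.prop _) hx hy)
  · obtain ⟨X, hX, hx⟩ := hC.exists_mem x
    exact ⟨f ⟨X, hX⟩, List.mem_map_of_mem (by simp), (hsupport _ x).2 hx⟩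

theorem isCubic_of_isRegularOfDegree [G.LocallyFinite] (h : G.IsRegularOfDegree 3) :
    IsCubic G := fun v => by
  rw [Set.ncard_eq_toFinset_card', Set.toFinset_card, G.card_neighborSet_eq_degree, h v]

end Counting

end CubicPathCover

open CubicPathCover in
theorem stmt_19_general {V : Type*} [Fintype V] (G : SimpleGraph V) [G.LocallyFinite]
    (hconn : G.Connected) (hcubic : G.IsRegularOfDegree 3) :
    ∃ L : List (Σ (u : V) (v : V), G.Walk u v),
      L.length ≤ ⌈(Fintype.card V : ℚ) / 9⌉₊ ∧
      (∀ p ∈ L, p.2.2.IsPath) ∧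
      L.Pairwise (fun p q => ∀ x ∈ p.2.2.support, x ∉ q.2.2.support) ∧
      ∀ x, ∃ p ∈ L, x ∈ p.2.2.support := by
  obtain ⟨C, hC⟩ := exists_isOptimal G
  have hcard := hC.nine_mul_card_le (isCubic_of_isRegularOfDegree hcubic) hconn
  obtain ⟨L, hL, hpaths⟩ := hC.isPathPartition.exists_walks
  refine ⟨L, ?_, hpaths⟩
  have hceil := Nat.le_ceil ((Fintype.card V : ℚ) / 9)
  rw [div_le_iff₀ (by norm_num)] at hceil
  have hceil' : Fintype.card V ≤ ⌈(Fintype.card V : ℚ) / 9⌉₊ * 9 := by exact_mod_cast hceil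
  omega

/-- Reed: every connected cubic simple graph on n vertices
contains at most ⌈n/9⌉ vertex-disjoint paths whose vertex sets together cover
all vertices of the graph. -/
theorem stmt_19 (n : ℕ) (G : SimpleGraph (Fin n)) [DecidableRel G.Adj]
    (hconn : G.Connected)
    (hcubic : ∀ v : Fin n, G.degree v = 3) :
    ∃ L : List (Σ (u : Fin n) (v : Fin n), G.Walk u v),
      L.length ≤ ⌈(n : ℚ) / 9⌉₊ ∧
      (∀ p ∈ L, p.2.2.IsPath) ∧
      List.Pairwise (fun p q => ∀ x ∈ p.2.2.support, x ∉ q.2.2.support) L ∧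
      (∀ x : Fin n, ∃ p ∈ L, x ∈ p.2.2.support) := by
  simpa only [Fintype.card_fin] using stmt_19_general G hconn hcubic
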